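/- arXiv:2605.19971 — 2 statements merged into one kernel-verified Lean document; each statement's English description precedes it below -/
import Mathlib

section
/- Let I be a bounded interval and Ω = ℝ × I. For any 1 ≤ p < ∞ and s ≥ 0, there is a constant C such that for all f ∈ W^{s,p}(Ω), the slicing estimate ‖f‖_{L^p_x(ℝ; W^{s,p}_y(I))} + ‖f‖_{L^p_y(I; W^{s,p}_x(ℝ))} ≤ C ‖f‖_{W^{s,p}(Ω)} holds; i.e., the W^{s,p} norm of almost every slice (in either variable) is p-integrable and controlled by the full two-dimensional W^{s,p} norm. -/
open MeasureTheory Real Set ENNReal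

/-- Gagliardo seminorm of a function on a 1D set `I`, with fractional order `θ` and
exponent `p`. -/
noncomputable def gag1 (θ p : ℝ) (I : Set ℝ) (g : ℝ → ℝ) : ℝ≥0∞ :=
  (∫⁻ y in I, ∫⁻ y' in I,
      ENNReal.ofReal (|g y - g y'| ^ p / |y - y'| ^ (1 + θ * p))) ^ (1 / p)

/-- The `W^{s,p}` (Slobodeckij) norm of a 1D function on the set `I`:
`‖g‖_{W^{⌊s⌋,p}}` plus the Gagliardo seminorm of order `s - ⌊s⌋` of `g^{(⌊s⌋)}`. -/
noncomputable def sob1 (s p : ℝ) (I : Set ℝ) (g : ℝ → ℝ) : ℝ≥0∞ :=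
  (∑ j ∈ Finset.range (⌊s⌋₊ + 1),
      eLpNorm (iteratedDeriv j g) (ENNReal.ofReal p) (volume.restrict I))
    + (if s = ⌊s⌋₊ then 0 else gag1 (s - ⌊s⌋₊) p I (iteratedDeriv ⌊s⌋₊ g))

/-- 2D Gagliardo seminorm of order `θ`, exponent `p`, applied to the `m`-th derivative. -/
noncomputable def gag2 (θ p : ℝ) (S : Set (ℝ × ℝ)) (f : ℝ × ℝ → ℝ) (m : ℕ) : ℝ≥0∞ :=
  (∫⁻ z in S, ∫⁻ z' in S,
      ENNReal.ofReal (‖iteratedFDeriv ℝ m f z - iteratedFDeriv ℝ m f z'‖ ^ p /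
        ‖z - z'‖ ^ (2 + θ * p))) ^ (1 / p)

/-- The `W^{s,p}` (Slobodeckij) norm of a 2D function on the set `S`. -/
noncomputable def sob2 (s p : ℝ) (S : Set (ℝ × ℝ)) (f : ℝ × ℝ → ℝ) : ℝ≥0∞ :=
  (∑ j ∈ Finset.range (⌊s⌋₊ + 1),
      eLpNorm (fun z => ‖iteratedFDeriv ℝ j f z‖) (ENNReal.ofReal p) (volume.restrict S))
    + (if s = ⌊s⌋₊ then 0 else gag2 (s - ⌊s⌋₊) p S f ⌊s⌋₊)

/-- The far part of the kernel `|t - t'| ^ (-(1 + q))` is integrable. -/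
lemma setLIntegral_inv_abs_sub_rpow_le {q ρ : ℝ} (hq : 0 < q) (hρ : 0 < ρ) (t : ℝ) :
    ∫⁻ t' in {t' : ℝ | ρ ≤ |t - t'|}, ENNReal.ofReal ((|t - t'| ^ (1 + q))⁻¹)
      ≤ ENNReal.ofReal (2 / q * (ρ ^ q)⁻¹) := by
  have htail : ∫⁻ τ in Ici ρ, ENNReal.ofReal ((|τ| ^ (1 + q))⁻¹)
      = ENNReal.ofReal (1 / q * (ρ ^ q)⁻¹) := by
    have hlt : -(1 + q) < -1 := by linarith
    have hcongr : ∫⁻ τ in Ioi ρ, ENNReal.ofReal ((|τ| ^ (1 + q))⁻¹)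
        = ∫⁻ τ in Ioi ρ, ENNReal.ofReal (τ ^ (-(1 + q))) := by
      refine setLIntegral_congr_fun measurableSet_Ioi fun τ hτ => ?_
      have hτ0 : 0 < τ := hρ.trans hτ
      simp only [abs_of_pos hτ0, Real.rpow_neg hτ0.le]
    rw [setLIntegral_congr Ioi_ae_eq_Ici.symm, hcongr, ← ofReal_integral_eq_lintegral_ofReal
      (integrableOn_Ioi_rpow_of_lt hlt hρ), integral_Ioi_rpow_of_lt hlt hρ]
    · congr 1
      rw [show -(1 + q) + 1 = -q by ring, Real.rpow_neg hρ.le]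
      field_simp
    · filter_upwards [ae_restrict_mem measurableSet_Ioi] with τ hτ
      exact Real.rpow_nonneg (hρ.trans hτ).le _
  have hmeas : MeasurableSet {τ : ℝ | ρ ≤ |τ|} := measurableSet_le (by fun_prop) (by fun_prop)
  have htrans : ∫⁻ t' in {t' : ℝ | ρ ≤ |t - t'|}, ENNReal.ofReal ((|t - t'| ^ (1 + q))⁻¹)
      = ∫⁻ τ in {τ : ℝ | ρ ≤ |τ|}, ENNReal.ofReal ((|τ| ^ (1 + q))⁻¹) := by
    rw [← lintegral_indicator hmeas,
      ← lintegral_indicator (measurableSet_le (by fun_prop) (by fun_prop)),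
      ← lintegral_sub_left_eq_self ({τ : ℝ | ρ ≤ |τ|}.indicator _) t]
    rfl
  have hneg : ∫⁻ τ in Iic (-ρ), ENNReal.ofReal ((|τ| ^ (1 + q))⁻¹)
      = ∫⁻ τ in Ici ρ, ENNReal.ofReal ((|τ| ^ (1 + q))⁻¹) := by
    rw [← lintegral_indicator measurableSet_Iic, ← lintegral_indicator measurableSet_Ici,
      ← lintegral_neg_eq_self]
    refine lintegral_congr fun τ => ?_
    simp [indicator]
  have hset : {τ : ℝ | ρ ≤ |τ|} = Ici ρ ∪ Iic (-ρ) := by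
    ext τ
    simp only [mem_ofPred_eq, le_abs, mem_union, mem_Ici, mem_Iic]
    constructor <;> rintro (h | h) <;> first | (left; linarith) | (right; linarith)
  rw [htrans, hset]
  refine (lintegral_union_le _ _ _).trans ?_
  rw [hneg, htail, ← ENNReal.ofReal_add (by positivity) (by positivity)]
  apply le_of_eq
  congr 1
  ring

lemma enorm_sub_rpow_le {E : Type*} [NormedAddCommGroup E] {p : ℝ} (hp : 1 ≤ p) (x y z : E) :
    ‖x - z‖ₑ ^ p ≤ 2 ^ (p - 1) * (‖x - y‖ₑ ^ p + ‖y - z‖ₑ ^ p) := by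
  refine le_trans ?_ (ENNReal.rpow_add_le_mul_rpow_add_rpow _ _ hp)
  gcongr
  rw [← sub_add_sub_cancel x y z]
  exact enorm_add_le _ _

/-- Averaging the triangle inequality over the points `w` of a box of area at least
`|t - t'| ^ 2` lying close to both `(u, t)` and `(u, t')`. -/
lemma enorm_sub_rpow_mul_le_lintegral {E : Type*} [NormedAddCommGroup E] {U T : Set ℝ} {R p : ℝ}
    (hUm : MeasurableSet U) (hT : T.OrdConnected)
    (hU : ∀ u ∈ U, ∀ r, 0 < r → r ≤ R → ENNReal.ofReal r ≤ volume (U ∩ Icc (u - r) (u + r)))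
    (hp : 1 ≤ p) {G : ℝ × ℝ → E} (hG : Continuous G) {u t t' : ℝ} (hu : u ∈ U) (ht : t ∈ T)
    (ht' : t' ∈ T) (hpos : 0 < |t - t'|) (hR : |t - t'| ≤ R) :
    ‖G (u, t) - G (u, t')‖ₑ ^ p * ENNReal.ofReal (|t - t'| ^ 2) ≤ 2 ^ (p - 1) *
      ((∫⁻ w in U ×ˢ T, {w | ‖(u, t) - w‖ ≤ |t - t'|}.indicator
          (fun w => ‖G (u, t) - G w‖ₑ ^ p) w)
        + ∫⁻ w in U ×ˢ T, {w | ‖(u, t') - w‖ ≤ |t' - t|}.indicator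
          (fun w => ‖G (u, t') - G w‖ₑ ^ p) w) := by
  set r := |t - t'| with hr
  set A : Set (ℝ × ℝ) := (U ∩ Icc (u - r) (u + r)) ×ˢ uIcc t t' with hA
  have hAm : MeasurableSet A := (hUm.inter measurableSet_Icc).prod measurableSet_uIcc
  have hvol : ENNReal.ofReal (r ^ 2) ≤ volume A := by
    rw [hA, Measure.volume_eq_prod, Measure.prod_prod, pow_two, ENNReal.ofReal_mul hpos.le]
    gcongr
    · exact hU u hu r hpos hR
    · rw [uIcc, Real.volume_Icc, max_sub_min_eq_abs, abs_sub_comm]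
  have hAS : A ⊆ U ×ˢ T := prod_mono inter_subset_left (hT.uIcc_subset ht ht')
  have hdist : ∀ w ∈ A, ‖(u, t) - w‖ ≤ r ∧ ‖(u, t') - w‖ ≤ r := by
    rintro ⟨w₁, w₂⟩ ⟨⟨-, hw₁⟩, hw₂⟩
    have h₁ : |u - w₁| ≤ r := by
      rw [abs_le]; constructor <;> linarith [hw₁.1, hw₁.2]
    have h₂ : |t - w₂| ≤ r := by
      have := abs_sub_left_of_mem_uIcc hw₂
      rw [abs_sub_comm t w₂, hr, abs_sub_comm t t']; exact this
    have h₃ : |t' - w₂| ≤ r := by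
      have := abs_sub_right_of_mem_uIcc hw₂
      rw [hr, abs_sub_comm t t']; exact this
    simp only [Prod.mk_sub_mk, Prod.norm_mk, Real.norm_eq_abs, sup_le_iff]
    exact ⟨⟨h₁, h₂⟩, h₁, h₃⟩
  have hle : ∀ z : ℝ × ℝ, (∀ w ∈ A, ‖z - w‖ ≤ r) →
      ∫⁻ w in A, ‖G z - G w‖ₑ ^ p
        ≤ ∫⁻ w in U ×ˢ T, {w | ‖z - w‖ ≤ r}.indicator (fun w => ‖G z - G w‖ₑ ^ p) w := by
    intro z hz
    refine le_trans (le_of_eq ?_) (lintegral_mono_set hAS)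
    refine setLIntegral_congr_fun hAm fun w hw => ?_
    exact (indicator_of_mem (s := {w | ‖z - w‖ ≤ r}) (hz w hw)
      (fun w => ‖G z - G w‖ₑ ^ p)).symm
  rw [abs_sub_comm t' t, ← hr]
  calc ‖G (u, t) - G (u, t')‖ₑ ^ p * ENNReal.ofReal (r ^ 2)
      ≤ ‖G (u, t) - G (u, t')‖ₑ ^ p * volume A := by gcongr
    _ = ∫⁻ _ in A, ‖G (u, t) - G (u, t')‖ₑ ^ p := by rw [setLIntegral_const]
    _ ≤ ∫⁻ w in A, 2 ^ (p - 1) * (‖G (u, t) - G w‖ₑ ^ p + ‖G (u, t') - G w‖ₑ ^ p) := by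
        refine lintegral_mono fun w => ?_
        rw [← enorm_neg (G (u, t') - G w), neg_sub]
        exact enorm_sub_rpow_le hp _ _ _
    _ = 2 ^ (p - 1) * ((∫⁻ w in A, ‖G (u, t) - G w‖ₑ ^ p)
          + ∫⁻ w in A, ‖G (u, t') - G w‖ₑ ^ p) := by
        have hm : ∀ z, Measurable fun w => ‖G z - G w‖ₑ ^ p := fun z =>
          (ENNReal.continuous_rpow_const.comp (continuous_const.sub hG).enorm).measurable
        rw [lintegral_const_mul' _ _ (by finiteness), lintegral_add_left (hm _)]
    _ ≤ _ := mul_le_mul_right (add_le_add (hle _ fun w hw => (hdist w hw).1)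
        (hle _ fun w hw => (hdist w hw).2)) _

/-- The function of `z` and of the second endpoint `t'` of a segment starting at `z` that dominates
the Gagliardo integrand along that segment, up to exchanging the endpoints. -/
noncomputable def segmentMajorant {E : Type*} [NormedAddCommGroup E] (U T : Set ℝ) (R p σ : ℝ)
    (G : ℝ × ℝ → E) (z : ℝ × ℝ) (t' : ℝ) : ℝ≥0∞ :=
  ENNReal.ofReal ((|z.2 - t'| ^ (1 + (2 + σ)))⁻¹) *
      (∫⁻ w in U ×ˢ T, {w | ‖z - w‖ ≤ |z.2 - t'|}.indicator (fun w => ‖G z - G w‖ₑ ^ p) w)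
    + {t' | R ≤ |z.2 - t'|}.indicator
        (fun t' => ENNReal.ofReal ((|z.2 - t'| ^ (1 + σ))⁻¹)) t' * ‖G z‖ₑ ^ p

lemma measurable_indicator_enorm_sub_rpow {E : Type*} [NormedAddCommGroup E]
    {G : ℝ × ℝ → E} (hG : Continuous G) (p : ℝ) :
    Measurable fun x : ((ℝ × ℝ) × ℝ) × (ℝ × ℝ) =>
      {w | ‖x.1.1 - w‖ ≤ |x.1.1.2 - x.1.2|}.indicator (fun w => ‖G x.1.1 - G w‖ₑ ^ p) x.2 := by
  have hΨ : Measurable fun x : ((ℝ × ℝ) × ℝ) × (ℝ × ℝ) => ‖G x.1.1 - G x.2‖ₑ ^ p :=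
    (ENNReal.continuous_rpow_const.comp (by fun_prop : Continuous
      fun x : ((ℝ × ℝ) × ℝ) × (ℝ × ℝ) => ‖G x.1.1 - G x.2‖ₑ)).measurable
  exact hΨ.indicator (s := {x | ‖x.1.1 - x.2‖ ≤ |x.1.1.2 - x.1.2|})
    (measurableSet_le (by fun_prop) (by fun_prop))

lemma measurable_segmentMajorant {E : Type*} [NormedAddCommGroup E] (U T : Set ℝ) (R p σ : ℝ)
    {G : ℝ × ℝ → E} (hG : Continuous G) :
    Measurable fun x : (ℝ × ℝ) × ℝ => segmentMajorant U T R p σ G x.1 x.2 := by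
  have hk : ∀ q : ℝ, Measurable fun x : (ℝ × ℝ) × ℝ =>
      ENNReal.ofReal ((|x.1.2 - x.2| ^ q)⁻¹) := fun q => by fun_prop
  have hφ : Measurable fun x : (ℝ × ℝ) × ℝ => ‖G x.1‖ₑ ^ p :=
    (ENNReal.continuous_rpow_const.comp (by fun_prop : Continuous
      fun x : (ℝ × ℝ) × ℝ => ‖G x.1‖ₑ)).measurable
  refine ((hk _).mul (measurable_indicator_enorm_sub_rpow hG p).lintegral_prod_right').add
    (Measurable.mul ?_ hφ)
  exact (hk _).indicator (s := {x | R ≤ |x.1.2 - x.2|})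
    (measurableSet_le (by fun_prop) (by fun_prop))

lemma enorm_sub_rpow_mul_le_segmentMajorant {E : Type*} [NormedAddCommGroup E] {U T : Set ℝ}
    {R p σ : ℝ} (hUm : MeasurableSet U) (hT : T.OrdConnected)
    (hU : ∀ u ∈ U, ∀ r, 0 < r → r ≤ R → ENNReal.ofReal r ≤ volume (U ∩ Icc (u - r) (u + r)))
    (hp : 1 ≤ p) {G : ℝ × ℝ → E} (hG : Continuous G) {u t t' : ℝ} (hu : u ∈ U) (ht : t ∈ T)
    (ht' : t' ∈ T) :
    ‖G (u, t) - G (u, t')‖ₑ ^ p * ENNReal.ofReal ((|t - t'| ^ (1 + σ))⁻¹) ≤ 2 ^ (p - 1) *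
      (segmentMajorant U T R p σ G (u, t) t' + segmentMajorant U T R p σ G (u, t') t) := by
  rcases eq_or_ne t t' with rfl | hne
  · simp [ENNReal.zero_rpow_of_pos (zero_lt_one.trans_le hp)]
  have hpos : 0 < |t - t'| := abs_pos.2 (sub_ne_zero.2 hne)
  rcases le_total R |t - t'| with hR | hR
  · have hR' : R ≤ |t' - t| := by rwa [abs_sub_comm]
    have htri := enorm_sub_rpow_le hp (G (u, t)) 0 (G (u, t'))
    rw [sub_zero, zero_sub, enorm_neg] at htri
    calc _ ≤ 2 ^ (p - 1) * (‖G (u, t)‖ₑ ^ p + ‖G (u, t')‖ₑ ^ p)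
          * ENNReal.ofReal ((|t - t'| ^ (1 + σ))⁻¹) := by gcongr
      _ = 2 ^ (p - 1) * (ENNReal.ofReal ((|t - t'| ^ (1 + σ))⁻¹) * ‖G (u, t)‖ₑ ^ p
          + ENNReal.ofReal ((|t' - t| ^ (1 + σ))⁻¹) * ‖G (u, t')‖ₑ ^ p) := by
        rw [abs_sub_comm t' t]; ring
      _ ≤ _ := by
        unfold segmentMajorant
        gcongr
        · rw [indicator_of_mem (by exact hR)]; exact le_add_self
        · rw [indicator_of_mem (by exact hR')]; exact le_add_self
  · have hk : ENNReal.ofReal ((|t - t'| ^ (1 + σ))⁻¹) = ENNReal.ofReal (|t - t'| ^ 2)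
        * ENNReal.ofReal ((|t - t'| ^ (1 + (2 + σ)))⁻¹) := by
      rw [← ENNReal.ofReal_mul (by positivity), show 1 + (2 + σ) = (1 + σ) + 2 by ring,
        Real.rpow_add hpos _ 2, Real.rpow_two]
      congr 1
      field_simp
    have key := enorm_sub_rpow_mul_le_lintegral hUm hT hU hp hG hu ht ht' hpos hR
    rw [hk, ← mul_assoc]
    refine (mul_le_mul_left key _).trans ?_
    rw [mul_assoc]
    refine mul_le_mul_right ?_ _
    rw [add_mul]
    unfold segmentMajorant
    refine add_le_add ?_ ?_
    · rw [mul_comm]; exact le_self_add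
    · rw [mul_comm, abs_sub_comm t t']; exact le_self_add

lemma setLIntegral_segmentMajorant_le {E : Type*} [NormedAddCommGroup E] {U T : Set ℝ}
    {R p σ : ℝ} (hR : 0 < R) (hσ : 0 < σ) (hp : 1 ≤ p) {G : ℝ × ℝ → E} (hG : Continuous G)
    (z : ℝ × ℝ) :
    ∫⁻ t' in T, segmentMajorant U T R p σ G z t' ≤
      ENNReal.ofReal (2 / (2 + σ)) *
        (∫⁻ w in U ×ˢ T, ‖G z - G w‖ₑ ^ p * ENNReal.ofReal ((‖z - w‖ ^ (2 + σ))⁻¹))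
      + ENNReal.ofReal (2 / σ * (R ^ σ)⁻¹) * ‖G z‖ₑ ^ p := by
  have hk : ∀ q : ℝ, Measurable fun t' : ℝ => ENNReal.ofReal ((|z.2 - t'| ^ q)⁻¹) :=
    fun q => by fun_prop
  have hS : ∀ ρ : ℝ, MeasurableSet {t' : ℝ | ρ ≤ |z.2 - t'|} := fun ρ =>
    measurableSet_le (by fun_prop) (by fun_prop)
  have hI : Measurable fun x : ℝ × (ℝ × ℝ) =>
      {w | ‖z - w‖ ≤ |z.2 - x.1|}.indicator (fun w => ‖G z - G w‖ₑ ^ p) x.2 :=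
    (measurable_indicator_enorm_sub_rpow hG p).comp
      (by fun_prop : Measurable fun x : ℝ × (ℝ × ℝ) => ((z, x.1), x.2))
  have htail : ∀ {q ρ : ℝ}, 0 < q → 0 < ρ →
      ∫⁻ t' in T, {t' | ρ ≤ |z.2 - t'|}.indicator
        (fun t' => ENNReal.ofReal ((|z.2 - t'| ^ (1 + q))⁻¹)) t'
        ≤ ENNReal.ofReal (2 / q * (ρ ^ q)⁻¹) := by
    intro q ρ hq hρ
    refine le_trans ?_ (setLIntegral_inv_abs_sub_rpow_le hq hρ z.2)
    rw [← lintegral_indicator (hS ρ)]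
    exact setLIntegral_le_lintegral _ _
  unfold segmentMajorant
  rw [lintegral_add_right _ (((hk _).indicator (hS R)).mul_const _)]
  refine add_le_add ?_ ?_
  · simp_rw [← lintegral_const_mul' _ _ ENNReal.ofReal_ne_top]
    rw [lintegral_lintegral_swap
      (((hk (1 + (2 + σ))).comp measurable_fst).mul hI).aemeasurable]
    refine lintegral_mono fun w => ?_
    rcases eq_or_ne z w with rfl | hne
    · simp [ENNReal.zero_rpow_of_pos (zero_lt_one.trans_le hp)]
    have hpos : 0 < ‖z - w‖ := norm_pos_iff.2 (sub_ne_zero.2 hne)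
    calc _ = ∫⁻ t' in T, ‖G z - G w‖ₑ ^ p * {t' | ‖z - w‖ ≤ |z.2 - t'|}.indicator
          (fun t' => ENNReal.ofReal ((|z.2 - t'| ^ (1 + (2 + σ)))⁻¹)) t' := by
          refine lintegral_congr fun t' => ?_
          by_cases h : ‖z - w‖ ≤ |z.2 - t'|
          · simp [indicator, h, mul_comm]
          · simp [indicator, h]
      _ = ‖G z - G w‖ₑ ^ p * ∫⁻ t' in T, {t' | ‖z - w‖ ≤ |z.2 - t'|}.indicator
          (fun t' => ENNReal.ofReal ((|z.2 - t'| ^ (1 + (2 + σ)))⁻¹)) t' :=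
          lintegral_const_mul _ ((hk _).indicator (hS _))
      _ ≤ ‖G z - G w‖ₑ ^ p * ENNReal.ofReal (2 / (2 + σ) * (‖z - w‖ ^ (2 + σ))⁻¹) := by
          gcongr
          exact htail (by linarith) hpos
      _ = _ := by
          rw [ENNReal.ofReal_mul (by positivity)]; ring
  · rw [lintegral_mul_const _ ((hk _).indicator (hS R))]
    gcongr
    exact htail hσ hR

/-- The Gagliardo energy along the segments `{u} × T` is controlled by the one on `U × T`. -/
theorem lintegral_gagliardo_slice_le {E : Type*} [NormedAddCommGroup E] {U T : Set ℝ} {R p σ : ℝ}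
    (hUm : MeasurableSet U) (hT : T.OrdConnected) (hR : 0 < R)
    (hU : ∀ u ∈ U, ∀ r, 0 < r → r ≤ R → ENNReal.ofReal r ≤ volume (U ∩ Icc (u - r) (u + r)))
    (hp : 1 ≤ p) (hσ : 0 < σ) {G : ℝ × ℝ → E} (hG : Continuous G) :
    ∫⁻ u in U, ∫⁻ t in T, ∫⁻ t' in T,
        ‖G (u, t) - G (u, t')‖ₑ ^ p * ENNReal.ofReal ((|t - t'| ^ (1 + σ))⁻¹)
      ≤ 2 ^ (p - 1) * (2 * (ENNReal.ofReal (2 / (2 + σ)) + ENNReal.ofReal (2 / σ * (R ^ σ)⁻¹)))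
        * ((∫⁻ z in U ×ˢ T, ∫⁻ w in U ×ˢ T,
              ‖G z - G w‖ₑ ^ p * ENNReal.ofReal ((‖z - w‖ ^ (2 + σ))⁻¹))
            + ∫⁻ z in U ×ˢ T, ‖G z‖ₑ ^ p) := by
  have hTm : MeasurableSet T := hT.measurableSet
  have hb := measurable_segmentMajorant U T R p σ hG
  have hb₁ : ∀ u, Measurable fun x : ℝ × ℝ => segmentMajorant U T R p σ G (u, x.1) x.2 :=
    fun u => by fun_prop
  have hφ : Measurable fun z => ‖G z‖ₑ ^ p :=
    (ENNReal.continuous_rpow_const.comp hG.enorm).measurable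
  set M : ℝ × ℝ → ℝ≥0∞ := fun z => ∫⁻ t' in T, segmentMajorant U T R p σ G z t' with hM
  have hMm : Measurable M := hb.lintegral_prod_right'
  calc _ ≤ ∫⁻ u in U, ∫⁻ t in T, ∫⁻ t' in T, 2 ^ (p - 1) *
        (segmentMajorant U T R p σ G (u, t) t' + segmentMajorant U T R p σ G (u, t') t) := by
        refine setLIntegral_mono' hUm fun u hu => setLIntegral_mono' hTm fun t ht =>
          setLIntegral_mono' hTm fun t' ht' => ?_
        exact enorm_sub_rpow_mul_le_segmentMajorant hUm hT hU hp hG hu ht ht'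
    _ = ∫⁻ u in U, 2 ^ (p - 1) * (2 * ∫⁻ t in T, M (u, t)) := by
        refine lintegral_congr fun u => ?_
        have hc : (2 : ℝ≥0∞) ^ (p - 1) ≠ ⊤ := by finiteness
        simp_rw [lintegral_const_mul' _ _ hc]
        congr 1
        rw [two_mul]
        have hl : ∀ t, Measurable fun t' => segmentMajorant U T R p σ G (u, t) t' := fun t =>
          by fun_prop
        simp_rw [lintegral_add_left (hl _)]
        rw [lintegral_add_left (hb₁ u).lintegral_prod_right']
        congr 1
        exact lintegral_lintegral_swap
          (f := fun t t' => segmentMajorant U T R p σ G (u, t') t)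
          (by fun_prop)
    _ = 2 ^ (p - 1) * (2 * ∫⁻ z in U ×ˢ T, M z) := by
        rw [lintegral_const_mul' _ _ (by finiteness), lintegral_const_mul' _ _ (by finiteness),
          Measure.volume_eq_prod, setLIntegral_prod _ hMm.aemeasurable]
    _ ≤ 2 ^ (p - 1) * (2 * ∫⁻ z in U ×ˢ T, (ENNReal.ofReal (2 / (2 + σ)) *
        (∫⁻ w in U ×ˢ T, ‖G z - G w‖ₑ ^ p * ENNReal.ofReal ((‖z - w‖ ^ (2 + σ))⁻¹))
        + ENNReal.ofReal (2 / σ * (R ^ σ)⁻¹) * ‖G z‖ₑ ^ p)) := by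
        gcongr with z
        exact setLIntegral_segmentMajorant_le hR hσ hp hG z
    _ ≤ _ := by
        rw [lintegral_add_right _ (hφ.const_mul _), lintegral_const_mul' _ _ (by finiteness),
          lintegral_const_mul' _ _ (by finiteness), mul_assoc, mul_assoc]
        gcongr
        rw [add_mul]
        gcongr
        · exact le_self_add
        · exact le_add_self

lemma ofReal_norm_rpow_div {E : Type*} [NormedAddCommGroup E] {p : ℝ} (hp : 0 ≤ p) (x : E)
    (c : ℝ) : ENNReal.ofReal (‖x‖ ^ p / c) = ‖x‖ₑ ^ p * ENNReal.ofReal c⁻¹ := by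
  rw [div_eq_mul_inv, ENNReal.ofReal_mul (by positivity),
    ← ENNReal.ofReal_rpow_of_nonneg (norm_nonneg _) hp, ofReal_norm]

lemma eLpNorm_ofReal_rpow {α E : Type*} [MeasurableSpace α] [NormedAddCommGroup E]
    {μ : Measure α} {p : ℝ} (hp : 0 < p) (g : α → E) :
    eLpNorm g (ENNReal.ofReal p) μ ^ p = ∫⁻ x, ‖g x‖ₑ ^ p ∂μ := by
  rw [eLpNorm_eq_lintegral_rpow_enorm_toReal (by simpa using hp) ENNReal.ofReal_ne_top,
    ENNReal.toReal_ofReal hp.le, ← ENNReal.rpow_mul, one_div_mul_cancel hp.ne', ENNReal.rpow_one]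

lemma gag1_rpow {θ p : ℝ} (hp : 0 < p) (I : Set ℝ) (g : ℝ → ℝ) :
    gag1 θ p I g ^ p = ∫⁻ y in I, ∫⁻ y' in I,
      ‖g y - g y'‖ₑ ^ p * ENNReal.ofReal ((|y - y'| ^ (1 + θ * p))⁻¹) := by
  rw [gag1, ← ENNReal.rpow_mul, one_div_mul_cancel hp.ne', ENNReal.rpow_one]
  simp_rw [← ofReal_norm_rpow_div hp.le, Real.norm_eq_abs]

lemma gag2_rpow {θ p : ℝ} (hp : 0 < p) (S : Set (ℝ × ℝ)) (f : ℝ × ℝ → ℝ) (m : ℕ) :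
    gag2 θ p S f m ^ p = ∫⁻ z in S, ∫⁻ w in S,
      ‖iteratedFDeriv ℝ m f z - iteratedFDeriv ℝ m f w‖ₑ ^ p
        * ENNReal.ofReal ((‖z - w‖ ^ (2 + θ * p))⁻¹) := by
  rw [gag2, ← ENNReal.rpow_mul, one_div_mul_cancel hp.ne', ENNReal.rpow_one]
  simp_rw [ofReal_norm_rpow_div hp.le]

/-- The slicing estimate for a family of functions `g u` on `T` whose derivatives are dominated by
functions `G j` on `U × T`. -/
theorem exists_lintegral_sob1_rpow_le {U T : Set ℝ} {R s p : ℝ} (hUm : MeasurableSet U)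
    (hT : T.OrdConnected) (hR : 0 < R)
    (hU : ∀ u ∈ U, ∀ r, 0 < r → r ≤ R → ENNReal.ofReal r ≤ volume (U ∩ Icc (u - r) (u + r)))
    (hp : 1 ≤ p) (hs : 0 ≤ s) :
    ∃ C : ℝ≥0∞, C ≠ ⊤ ∧ ∀ {E : ℕ → Type} [∀ j, NormedAddCommGroup (E j)]
      {G : ∀ j, ℝ × ℝ → E j} {g : ℝ → ℝ → ℝ} {Q : ℝ≥0∞},
      (∀ j ≤ ⌊s⌋₊, Continuous (G j)) →
      (∀ j ≤ ⌊s⌋₊, ∀ u t, ‖iteratedDeriv j (g u) t‖ₑ ≤ ‖G j (u, t)‖ₑ) →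
      (∀ u t t', ‖iteratedDeriv ⌊s⌋₊ (g u) t - iteratedDeriv ⌊s⌋₊ (g u) t'‖ₑ
        ≤ ‖G ⌊s⌋₊ (u, t) - G ⌊s⌋₊ (u, t')‖ₑ) →
      (∀ j ≤ ⌊s⌋₊, ∫⁻ z in U ×ˢ T, ‖G j z‖ₑ ^ p ≤ Q) →
      (s ≠ ⌊s⌋₊ → ∫⁻ z in U ×ˢ T, ∫⁻ w in U ×ˢ T, ‖G ⌊s⌋₊ z - G ⌊s⌋₊ w‖ₑ ^ p
        * ENNReal.ofReal ((‖z - w‖ ^ (2 + (s - ⌊s⌋₊) * p))⁻¹) ≤ Q) →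
      ∫⁻ u in U, sob1 s p T (g u) ^ p ≤ C * Q := by
  have hp0 : 0 < p := zero_lt_one.trans_le hp
  set m := ⌊s⌋₊ with hm
  obtain ⟨K, hK, hslice⟩ : ∃ K : ℝ≥0∞, K ≠ ⊤ ∧ (s ≠ m → ∀ {E : Type} [NormedAddCommGroup E]
      {G : ℝ × ℝ → E}, Continuous G → ∫⁻ u in U, ∫⁻ t in T, ∫⁻ t' in T,
          ‖G (u, t) - G (u, t')‖ₑ ^ p * ENNReal.ofReal ((|t - t'| ^ (1 + (s - m) * p))⁻¹)
        ≤ K * ((∫⁻ z in U ×ˢ T, ∫⁻ w in U ×ˢ T,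
              ‖G z - G w‖ₑ ^ p * ENNReal.ofReal ((‖z - w‖ ^ (2 + (s - m) * p))⁻¹))
            + ∫⁻ z in U ×ˢ T, ‖G z‖ₑ ^ p)) := by
    refine ⟨_, ?_, fun hsm E _ G hG => lintegral_gagliardo_slice_le hUm hT hR hU hp
      (mul_pos (sub_pos.2 ((Nat.floor_le hs).lt_of_ne' hsm)) hp0) hG⟩
    finiteness
  refine ⟨2 ^ (p - 1) * ((m + 1 : ℕ) ^ (p - 1) * (m + 1 : ℕ) + K * 2), ?_, ?_⟩
  · have : ((m + 1 : ℕ) : ℝ≥0∞) ^ (p - 1) ≠ ⊤ :=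
      ENNReal.rpow_ne_top_of_nonneg (by linarith) (ENNReal.natCast_ne_top _)
    finiteness
  intro E _ G g Q hG hle hsub hint hgag
  have hφ : ∀ j ∈ Finset.range (m + 1), Measurable fun z => ‖G j z‖ₑ ^ p := fun j hj =>
    (ENNReal.continuous_rpow_const.comp
      (hG j (Nat.lt_succ_iff.1 (Finset.mem_range.1 hj))).enorm).measurable
  have hα : ∀ j ∈ Finset.range (m + 1), Measurable fun u => ∫⁻ t in T, ‖G j (u, t)‖ₑ ^ p :=
    fun j hj => (hφ j hj).lintegral_prod_right'
  set B : ℝ → ℝ≥0∞ := fun u =>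
    if s = m then 0 else gag1 (s - m) p T (iteratedDeriv m (g u)) with hB
  have hBint : ∫⁻ u in U, B u ^ p ≤ K * 2 * Q := by
    by_cases hsm : s = m
    · simp [hB, hsm, ENNReal.zero_rpow_of_pos hp0]
    · simp only [hB, if_neg hsm, gag1_rpow hp0]
      calc _ ≤ _ := lintegral_mono fun u => lintegral_mono fun t => lintegral_mono fun t' =>
            mul_le_mul_left (ENNReal.rpow_le_rpow (hsub u t t') hp0.le) _
        _ ≤ _ := hslice hsm (hG m le_rfl)
        _ ≤ K * (Q + Q) := by
            gcongr
            · exact hgag hsm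
            · exact hint m le_rfl
        _ = K * 2 * Q := by ring
  calc ∫⁻ u in U, sob1 s p T (g u) ^ p
      ≤ ∫⁻ u in U, 2 ^ (p - 1) * ((m + 1 : ℕ) ^ (p - 1)
          * (∑ j ∈ Finset.range (m + 1), ∫⁻ t in T, ‖G j (u, t)‖ₑ ^ p) + B u ^ p) := by
        refine lintegral_mono fun u => ?_
        refine (ENNReal.rpow_add_le_mul_rpow_add_rpow _ _ hp).trans ?_
        refine mul_le_mul_right (add_le_add ?_ le_rfl) _
        refine (ENNReal.rpow_sum_le_const_mul_sum_rpow _ _ hp).trans ?_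
        rw [Finset.card_range]
        refine mul_le_mul_right (Finset.sum_le_sum fun j hj => ?_) _
        rw [eLpNorm_ofReal_rpow hp0]
        exact lintegral_mono fun t => ENNReal.rpow_le_rpow
          (hle j (Nat.lt_succ_iff.1 (Finset.mem_range.1 hj)) u t) hp0.le
    _ = 2 ^ (p - 1) * ((m + 1 : ℕ) ^ (p - 1)
          * (∑ j ∈ Finset.range (m + 1), ∫⁻ z in U ×ˢ T, ‖G j z‖ₑ ^ p)
          + ∫⁻ u in U, B u ^ p) := by
        rw [lintegral_const_mul' _ _ (by finiteness), lintegral_add_left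
          ((Finset.measurable_sum _ hα).const_mul _),
          lintegral_const_mul _ (Finset.measurable_sum _ hα), lintegral_finsetSum' _
          fun j hj => (hα j hj).aemeasurable]
        congr 3
        refine Finset.sum_congr rfl fun j hj => ?_
        rw [Measure.volume_eq_prod, setLIntegral_prod _ (hφ j hj).aemeasurable]
    _ ≤ 2 ^ (p - 1) * ((m + 1 : ℕ) ^ (p - 1) * (∑ j ∈ Finset.range (m + 1), Q)
          + K * 2 * Q) := by
        gcongr with j hj
        exact hint j (Nat.lt_succ_iff.1 (Finset.mem_range.1 hj))
    _ = _ := by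
        rw [Finset.sum_const, Finset.card_range, nsmul_eq_mul]
        ring

lemma iteratedDeriv_comp_line {n : WithTop ℕ∞} {F : Type*} [NormedAddCommGroup F]
    [NormedSpace ℝ F] {f : F → ℝ} (hf : ContDiff ℝ n f) {j : ℕ} (hj : (j : WithTop ℕ∞) ≤ n)
    (c v : F) (t : ℝ) :
    iteratedDeriv j (fun t : ℝ => f (c + t • v)) t = iteratedFDeriv ℝ j f (c + t • v) fun _ => v := by
  have hf' : ContDiff ℝ n fun z => f (c + z) := hf.comp (contDiff_const.add contDiff_id)
  have h := (ContinuousLinearMap.toSpanSingleton ℝ v).iteratedFDeriv_comp_right hf' t hj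
  rw [iteratedFDeriv_comp_add_left] at h
  rw [iteratedDeriv_eq_iteratedFDeriv]
  change iteratedFDeriv ℝ j ((fun z => f (c + z)) ∘ ContinuousLinearMap.toSpanSingleton ℝ v) t _ = _
  rw [h]
  simp [ContinuousMultilinearMap.compContinuousLinearMap_apply]

lemma enorm_apply_const_le {F : Type*} [NormedAddCommGroup F] [NormedSpace ℝ F] {j : ℕ}
    (A : ContinuousMultilinearMap ℝ (fun _ : Fin j => F) ℝ) {v : F} (hv : ‖v‖ ≤ 1) :
    ‖A fun _ => v‖ₑ ≤ ‖A‖ₑ := by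
  rw [enorm_le_iff_norm_le]
  refine (A.le_opNorm _).trans (mul_le_of_le_one_right (norm_nonneg _) ?_)
  exact Finset.prod_le_one (fun _ _ => norm_nonneg _) fun _ _ => hv

lemma setLIntegral_prod_swap (U T : Set ℝ) (H : ℝ × ℝ → ℝ≥0∞) :
    ∫⁻ z in U ×ˢ T, H z.swap = ∫⁻ z in T ×ˢ U, H z := by
  rw [Measure.volume_eq_prod, ← Measure.prod_restrict, ← Measure.prod_restrict,
    lintegral_prod_swap]

lemma lintegral_iteratedFDeriv_le_sob2_rpow {s p : ℝ} (hp : 0 < p) (S : Set (ℝ × ℝ))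
    (f : ℝ × ℝ → ℝ) {j : ℕ} (hj : j ≤ ⌊s⌋₊) :
    ∫⁻ z in S, ‖iteratedFDeriv ℝ j f z‖ₑ ^ p ≤ sob2 s p S f ^ p := by
  have h := eLpNorm_ofReal_rpow (μ := volume.restrict S) hp fun z => ‖iteratedFDeriv ℝ j f z‖
  simp only [enorm_norm] at h
  rw [← h]
  refine ENNReal.rpow_le_rpow (le_add_right ?_) hp.le
  exact Finset.single_le_sum
    (f := fun j => eLpNorm (fun z => ‖iteratedFDeriv ℝ j f z‖) (ENNReal.ofReal p)
      (volume.restrict S)) (fun _ _ => zero_le) (Finset.mem_range.2 (Nat.lt_succ_of_le hj))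

lemma lintegral_gagliardo_le_sob2_rpow {s p : ℝ} (hp : 0 < p) (S : Set (ℝ × ℝ))
    (f : ℝ × ℝ → ℝ) (hs : s ≠ ⌊s⌋₊) :
    ∫⁻ z in S, ∫⁻ w in S, ‖iteratedFDeriv ℝ ⌊s⌋₊ f z - iteratedFDeriv ℝ ⌊s⌋₊ f w‖ₑ ^ p
        * ENNReal.ofReal ((‖z - w‖ ^ (2 + (s - ⌊s⌋₊) * p))⁻¹) ≤ sob2 s p S f ^ p := by
  rw [← gag2_rpow hp]
  refine ENNReal.rpow_le_rpow (le_add_left ?_) hp.le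
  rw [if_neg hs]

lemma ofReal_le_volume_Icc_inter {a b u r : ℝ} (hu : u ∈ Icc a b) (hr : r ≤ (b - a) / 2) :
    ENNReal.ofReal r ≤ volume (Icc a b ∩ Icc (u - r) (u + r)) := by
  rcases le_total r 0 with h0 | h0
  · simp [ENNReal.ofReal_of_nonpos h0]
  rw [Icc_inter_Icc, Real.volume_Icc]
  refine ENNReal.ofReal_le_ofReal ?_
  have := hu.1
  have := hu.2
  rcases max_choice a (u - r) with h | h <;> rcases min_choice b (u + r) with h' | h' <;>
    simp only [h, h'] <;> linarith

/-- Slicing estimate: on `Ω = ℝ × I` with `I` a bounded interval,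
for `1 ≤ p < ∞` and `s ≥ 0`, the mixed Bochner norms
`‖f‖_{Lᵖ_x(ℝ; W^{s,p}_y(I))} + ‖f‖_{Lᵖ_y(I; W^{s,p}_x(ℝ))}` are controlled by
`C ‖f‖_{W^{s,p}(Ω)}`. -/
theorem stmt3 (a b : ℝ) (hab : a < b) (p s : ℝ) (hp : 1 ≤ p) (hs : 0 ≤ s) :
    ∃ C : ℝ≥0∞, C ≠ ⊤ ∧
      ∀ f : ℝ × ℝ → ℝ, ContDiff ℝ (⌊s⌋₊ : ℕ) f →
        (∫⁻ x : ℝ, (sob1 s p (Set.Icc a b) (fun y => f (x, y))) ^ p) ^ (1 / p)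
            + (∫⁻ y in Set.Icc a b, (sob1 s p Set.univ (fun x => f (x, y))) ^ p) ^ (1 / p)
          ≤ C * sob2 s p (Set.univ ×ˢ Set.Icc a b) f := by
  have hp0 : 0 < p := zero_lt_one.trans_le hp
  obtain ⟨C₁, hC₁, h₁⟩ := exists_lintegral_sob1_rpow_le (U := univ) (T := Icc a b) (R := 1)
    MeasurableSet.univ ordConnected_Icc one_pos (fun u _ r hr _ => by
      rw [univ_inter, Real.volume_Icc]
      exact ENNReal.ofReal_le_ofReal (by linarith)) hp hs
  obtain ⟨C₂, hC₂, h₂⟩ := exists_lintegral_sob1_rpow_le (U := Icc a b) (T := univ)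
    (R := (b - a) / 2) measurableSet_Icc ordConnected_univ (by linarith)
    (fun u hu r _ hr => ofReal_le_volume_Icc_inter hu hr) hp hs
  refine ⟨C₁ ^ (1 / p) + C₂ ^ (1 / p), by finiteness, fun f hf => ?_⟩
  have hcont : ∀ j ≤ ⌊s⌋₊, Continuous (iteratedFDeriv ℝ j f) := fun j hj =>
    hf.continuous_iteratedFDeriv (by exact_mod_cast hj)
  have hy : ∀ j ≤ ⌊s⌋₊, ∀ x y, iteratedDeriv j (fun y => f (x, y)) y
      = iteratedFDeriv ℝ j f (x, y) fun _ => (0, 1) := fun j hj x y => by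
    simpa using iteratedDeriv_comp_line hf (by exact_mod_cast hj) (x, 0) (0, 1) y
  have hx : ∀ j ≤ ⌊s⌋₊, ∀ y x, iteratedDeriv j (fun x => f (x, y)) x
      = iteratedFDeriv ℝ j f (x, y) fun _ => (1, 0) := fun j hj y x => by
    simpa using iteratedDeriv_comp_line hf (by exact_mod_cast hj) (0, y) (1, 0) x
  have hroot : ∀ {A C : ℝ≥0∞}, A ≤ C * sob2 s p (univ ×ˢ Icc a b) f ^ p →
      A ^ (1 / p) ≤ C ^ (1 / p) * sob2 s p (univ ×ˢ Icc a b) f := fun {A C} hA => by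
    refine (ENNReal.rpow_le_rpow hA (by positivity)).trans_eq ?_
    rw [ENNReal.mul_rpow_of_nonneg _ _ (by positivity), ← ENNReal.rpow_mul,
      mul_one_div_cancel hp0.ne', ENNReal.rpow_one]
  have hswap : ∀ z w : ℝ × ℝ, ‖z.swap - w.swap‖ = ‖z - w‖ := fun z w => by
    simp [Prod.norm_def, max_comm]
  rw [add_mul]
  refine add_le_add (hroot ?_) (hroot ?_)
  · rw [← setLIntegral_univ]
    refine h₁ (G := fun j => iteratedFDeriv ℝ j f) (g := fun x y => f (x, y)) hcont
      (fun j hj x y => ?_) (fun x y y' => ?_)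
      (fun j hj => lintegral_iteratedFDeriv_le_sob2_rpow hp0 _ f hj)
      (lintegral_gagliardo_le_sob2_rpow hp0 _ f)
    · rw [hy j hj]
      exact enorm_apply_const_le _ (by simp [Prod.norm_def])
    · rw [hy _ le_rfl, hy _ le_rfl, ← sub_apply]
      exact enorm_apply_const_le _ (by simp [Prod.norm_def])
  · refine h₂ (G := fun j z => iteratedFDeriv ℝ j f z.swap) (g := fun y x => f (x, y))
      (fun j hj => (hcont j hj).comp continuous_swap)
      (fun j hj x y => ?_) (fun x y y' => ?_) (fun j hj => ?_) fun hsm => ?_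
    · rw [hx j hj]
      exact enorm_apply_const_le _ (by simp [Prod.norm_def])
    · rw [hx _ le_rfl, hx _ le_rfl, ← sub_apply]
      exact enorm_apply_const_le _ (by simp [Prod.norm_def])
    · rw [setLIntegral_prod_swap _ _ fun z => ‖iteratedFDeriv ℝ j f z‖ₑ ^ p]
      exact lintegral_iteratedFDeriv_le_sob2_rpow hp0 _ f hj
    · refine (le_of_eq ?_).trans (lintegral_gagliardo_le_sob2_rpow hp0 _ f hsm)
      rw [← setLIntegral_prod_swap]
      refine lintegral_congr fun z => ?_
      rw [← setLIntegral_prod_swap]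
      simp only [hswap, Prod.swap_swap]
end

section
/- Let s > 1 + 1/p with 1 < p < ∞, Ω = ℝ × [-1,1], and let φ ∈ W^{s,p}(Ω). Let y_* : ℝ → [-1,1] be measurable and B ⊂ ℝ measurable such that ∂_y φ(x, y_*(x)) = 0 for a.e. x ∈ B. Then there exists C = C(s,p) such that for every v ∈ H^1(Ω), ∫_B ∫_{-1}^1 |v(x,y)|² · |∂_y φ(x,y)| / |y - y_*(x)| dy dx ≤ C ‖φ‖_{W^{s,p}(Ω)} ‖v‖_{H^1(Ω)}². -/
open MeasureTheory Real Set ENNReal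

/-- The infinite channel `Ω = ℝ × [-1,1]`. -/
def channel : Set (ℝ × ℝ) := Set.univ ×ˢ Set.Icc (-1 : ℝ) 1

lemma enorm_sub_le_lintegral_deriv {u : ℝ → ℝ} (hu : Differentiable ℝ u) (a b : ℝ) :
    ‖u b - u a‖ₑ ≤ ∫⁻ r in uIcc a b, ‖deriv u r‖ₑ := by
  by_cases h : ∫⁻ r in uIcc a b, ‖deriv u r‖ₑ = ⊤
  · simp [h]
  have hint : IntegrableOn (deriv u) (uIcc a b) :=
    ⟨(measurable_deriv u).aestronglyMeasurable, lt_top_iff_ne_top.2 h⟩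
  have hii : IntervalIntegrable (deriv u) volume a b :=
    intervalIntegrable_iff.2 (hint.mono_set uIoc_subset_uIcc)
  rw [← intervalIntegral.integral_deriv_eq_sub (fun x _ => hu x) hii,
    ← ofReal_norm, intervalIntegral.norm_intervalIntegral_eq, ofReal_norm]
  exact (enorm_integral_le_lintegral_enorm _).trans
    (lintegral_mono_set uIoc_subset_uIcc)

/-- On an interval of length at least one, the supremum is controlled by the `W^{1,1}` norm. -/
lemma enorm_le_lintegral_add_deriv {u : ℝ → ℝ} (hu : Differentiable ℝ u) {a b t : ℝ}
    (hab : a + 1 ≤ b) (ht : t ∈ Icc a b) :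
    ‖u t‖ₑ ≤ ∫⁻ r in Icc a b, (‖u r‖ₑ + ‖deriv u r‖ₑ) := by
  set D := ∫⁻ r in Icc a b, ‖deriv u r‖ₑ
  have hvol : 1 ≤ volume (Icc a b) := by
    rw [Real.volume_Icc]; exact ENNReal.one_le_ofReal.2 (by linarith)
  have key : ∀ r ∈ Icc a b, ‖u t‖ₑ ≤ ‖u r‖ₑ + D := by
    intro r hr
    calc ‖u t‖ₑ = ‖u r + (u t - u r)‖ₑ := by congr 1; ring
      _ ≤ ‖u r‖ₑ + ‖u t - u r‖ₑ := enorm_add_le _ _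
      _ ≤ ‖u r‖ₑ + D := by
        gcongr
        exact (enorm_sub_le_lintegral_deriv hu r t).trans
          (lintegral_mono_set (uIcc_subset_Icc hr ht))
  by_cases hle : ‖u t‖ₑ ≤ D
  · exact hle.trans (lintegral_mono fun r => le_add_self)
  have hDt : D ≠ ⊤ := (not_le.1 hle).ne_top
  have h1 : ‖u t‖ₑ - D ≤ ∫⁻ r in Icc a b, ‖u r‖ₑ := by
    calc ‖u t‖ₑ - D ≤ (‖u t‖ₑ - D) * volume (Icc a b) := le_mul_of_one_le_right' hvol
      _ = ∫⁻ _ in Icc a b, (‖u t‖ₑ - D) := by simp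
      _ ≤ _ := setLIntegral_mono' measurableSet_Icc
        fun r hr => tsub_le_iff_right.2 (key r hr)
  rw [lintegral_add_right _ (measurable_deriv u).enorm]
  exact tsub_le_iff_right.1 h1

lemma exists_lintegral_abs_sub_rpow_le {γ : ℝ} (hγ : γ < 1) :
    ∃ W : ℝ≥0∞, W ≠ ⊤ ∧ ∀ y₀ ∈ Icc (-1 : ℝ) 1,
      ∫⁻ y in Icc (-1 : ℝ) 1, ENNReal.ofReal (|y - y₀| ^ (-γ)) ≤ W := by
  refine ⟨∫⁻ t in Icc (-2 : ℝ) 2, ENNReal.ofReal (|t| ^ (-γ)), ?_, fun y₀ hy₀ => ?_⟩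
  · have h0 : IntegrableOn (fun t : ℝ => |t| ^ (-γ)) (Icc 0 2) := by
      have := (intervalIntegral.intervalIntegrable_rpow' (r := -γ) (a := 0) (b := 2)
        (by linarith))
      rw [intervalIntegrable_iff_integrableOn_Icc_of_le (by norm_num)] at this
      refine this.congr_fun (fun t ht => ?_) measurableSet_Icc
      simp [abs_of_nonneg ht.1]
    have h1 : IntegrableOn (fun t : ℝ => |t| ^ (-γ)) (Icc (-2) 0) := by
      have := h0.comp_neg
      simpa using this
    have h2 := h1.union h0
    rw [Icc_union_Icc_eq_Icc (by norm_num) (by norm_num)] at h2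
    exact (Integrable.lintegral_lt_top h2).ne
  · rw [← lintegral_indicator measurableSet_Icc, ← lintegral_indicator measurableSet_Icc,
      ← lintegral_sub_right_eq_self
        ((Icc (-2 : ℝ) 2).indicator fun t => ENNReal.ofReal (|t| ^ (-γ))) y₀]
    refine lintegral_mono fun y => ?_
    simp only [indicator]
    split_ifs with h1 h2
    · exact le_rfl
    · exact absurd ⟨by linarith [h1.1, hy₀.2], by linarith [h1.2, hy₀.1]⟩ h2
    · simp
    · simp

lemma channel_restrict :
    (volume.restrict channel : Measure (ℝ × ℝ)) =
      (volume : Measure ℝ).prod (volume.restrict (Icc (-1 : ℝ) 1)) := by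
  rw [channel, Measure.volume_eq_prod, ← Measure.prod_restrict, Measure.restrict_univ]

lemma lintegral_channel {F : ℝ × ℝ → ℝ≥0∞} (hF : Measurable F) :
    ∫⁻ z in channel, F z = ∫⁻ x, ∫⁻ y in Icc (-1 : ℝ) 1, F (x, y) := by
  rw [channel_restrict, lintegral_prod _ hF.aemeasurable]

lemma lintegral_channel_symm {F : ℝ × ℝ → ℝ≥0∞} (hF : Measurable F) :
    ∫⁻ z in channel, F z = ∫⁻ y in Icc (-1 : ℝ) 1, ∫⁻ x, F (x, y) := by
  rw [channel_restrict, lintegral_prod_symm _ hF.aemeasurable]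

/-- The density bounding both `|v|^{k+1}` and the derivatives of `v^{k+1}`. -/
noncomputable def powDensity (v : ℝ × ℝ → ℝ) (k : ℕ) (z : ℝ × ℝ) : ℝ≥0∞ :=
  ‖v z‖ₑ ^ (k + 1) + (k + 1) * (‖v z‖ₑ ^ k * ‖fderiv ℝ v z‖ₑ)

lemma measurable_powDensity {v : ℝ × ℝ → ℝ} (hv : Differentiable ℝ v) (k : ℕ) :
    Measurable (powDensity v k) := by
  have h1 := hv.continuous.measurable.enorm
  have h2 := (measurable_fderiv ℝ v).enorm
  unfold powDensity
  fun_prop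

lemma enorm_pow_add_deriv_le {v : ℝ × ℝ → ℝ} (hv : Differentiable ℝ v) (k : ℕ)
    {ℓ : ℝ → ℝ × ℝ} {e : ℝ × ℝ} (he : ‖e‖ ≤ 1) {t : ℝ} (hℓ : HasDerivAt ℓ e t) :
    ‖v (ℓ t) ^ (k + 1)‖ₑ + ‖deriv (fun r => v (ℓ r) ^ (k + 1)) t‖ₑ ≤ powDensity v k (ℓ t) := by
  have h : HasDerivAt (fun r => v (ℓ r)) (fderiv ℝ v (ℓ t) e) t :=
    (hv (ℓ t)).hasFDerivAt.comp_hasDerivAt t hℓ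
  have h' := h.pow (k + 1)
  have hd : deriv (fun r => v (ℓ r) ^ (k + 1)) t =
    ((k : ℝ) + 1) * (v (ℓ t) ^ k * fderiv ℝ v (ℓ t) e) := by
    rw [show (fun r => v (ℓ r) ^ (k + 1)) = (fun r => v (ℓ r)) ^ (k + 1) from rfl, h'.deriv]
    push_cast
    ring
  have he' : ‖fderiv ℝ v (ℓ t) e‖ₑ ≤ ‖fderiv ℝ v (ℓ t)‖ₑ := by
    rw [enorm_le_iff_norm_le]
    calc _ ≤ ‖fderiv ℝ v (ℓ t)‖ * ‖e‖ := ContinuousLinearMap.le_opNorm _ _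
      _ ≤ _ := mul_le_of_le_one_right (norm_nonneg _) he
  have hk : ‖((k : ℝ) + 1)‖ₑ = (k : ℝ≥0∞) + 1 := by
    rw [Real.enorm_eq_ofReal (by positivity), ENNReal.ofReal_add (by positivity) (by simp)]
    simp
  rw [hd, enorm_mul, enorm_mul, hk, enorm_pow, enorm_pow, powDensity]
  gcongr

lemma hasDerivAt_prodMk_right (x t : ℝ) : HasDerivAt (fun r : ℝ => (x, r)) (0, 1) t :=
  (hasDerivAt_const t x).prodMk (hasDerivAt_id t)

lemma hasDerivAt_prodMk_left (y t : ℝ) : HasDerivAt (fun r : ℝ => (r, y)) (1, 0) t :=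
  (hasDerivAt_id t).prodMk (hasDerivAt_const t y)

lemma enorm_pow_le_lintegral_snd {v : ℝ × ℝ → ℝ} (hv : Differentiable ℝ v) (k : ℕ) (x : ℝ)
    {y : ℝ} (hy : y ∈ Icc (-1 : ℝ) 1) :
    ‖v (x, y)‖ₑ ^ (k + 1) ≤ ∫⁻ r in Icc (-1 : ℝ) 1, powDensity v k (x, r) := by
  have hu : Differentiable ℝ fun r => v (x, r) ^ (k + 1) := by fun_prop
  rw [← enorm_pow]
  refine (enorm_le_lintegral_add_deriv hu (by norm_num) hy).trans (lintegral_mono fun r => ?_)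
  exact enorm_pow_add_deriv_le hv k (by simp [Prod.norm_def]) (hasDerivAt_prodMk_right x r)

lemma enorm_pow_le_lintegral_fst {v : ℝ × ℝ → ℝ} (hv : Differentiable ℝ v) (k : ℕ) (x y : ℝ) :
    ‖v (x, y)‖ₑ ^ (k + 1) ≤ ∫⁻ r, powDensity v k (r, y) := by
  have hu : Differentiable ℝ fun r => v (r, y) ^ (k + 1) := by fun_prop
  rw [← enorm_pow]
  refine (enorm_le_lintegral_add_deriv hu (le_refl (x + 1)) ⟨le_rfl, by linarith⟩).trans
    ((lintegral_mono fun r => ?_).trans (setLIntegral_le_lintegral _ _))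
  exact enorm_pow_add_deriv_le hv k (by simp [Prod.norm_def]) (hasDerivAt_prodMk_left y r)

lemma lintegral_enorm_pow_le_sq {v : ℝ × ℝ → ℝ} (hv : Differentiable ℝ v) (k : ℕ) :
    ∫⁻ z in channel, ‖v z‖ₑ ^ (2 * (k + 1)) ≤ (∫⁻ z in channel, powDensity v k z) ^ 2 := by
  have hm := hv.continuous.measurable.enorm
  have hE := measurable_powDensity hv k
  rw [lintegral_channel (by fun_prop)]
  calc ∫⁻ x, ∫⁻ y in Icc (-1 : ℝ) 1, ‖v (x, y)‖ₑ ^ (2 * (k + 1))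
      ≤ ∫⁻ x, ∫⁻ y in Icc (-1 : ℝ) 1, (∫⁻ r in Icc (-1 : ℝ) 1, powDensity v k (x, r)) *
          (∫⁻ r, powDensity v k (r, y)) := by
        refine lintegral_mono fun x => setLIntegral_mono' measurableSet_Icc fun y hy => ?_
        rw [two_mul, pow_add]
        exact mul_le_mul' (enorm_pow_le_lintegral_snd hv k x hy)
          (enorm_pow_le_lintegral_fst hv k x y)
    _ = ∫⁻ x, (∫⁻ r in Icc (-1 : ℝ) 1, powDensity v k (x, r)) *
          (∫⁻ z in channel, powDensity v k z) := by
        refine lintegral_congr fun x => ?_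
        rw [lintegral_const_mul _ hE.lintegral_prod_left', lintegral_channel_symm hE]
    _ = _ := by
        rw [lintegral_mul_const _ hE.lintegral_prod_right', ← lintegral_channel hE, sq]

lemma powDensity_succ_le (v : ℝ × ℝ → ℝ) (k : ℕ) (z : ℝ × ℝ) :
    powDensity v (k + 1) z ≤ ‖v z‖ₑ ^ 2 + ‖v z‖ₑ ^ (2 * (k + 1)) +
      (k + 2) * (‖v z‖ₑ ^ (2 * (k + 1)) + ‖fderiv ℝ v z‖ₑ ^ 2) := by
  have hmul : ∀ a b : ℝ≥0∞, a * b ≤ a ^ 2 + b ^ 2 := by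
    intro a b
    rcases le_total a b with h | h
    · exact (mul_le_mul_left h b).trans (by rw [sq b]; exact le_add_self)
    · exact (mul_le_mul_right h a).trans (by rw [sq a]; exact le_self_add)
  have hpow : ‖v z‖ₑ ^ (k + 1 + 1) ≤ ‖v z‖ₑ ^ 2 + ‖v z‖ₑ ^ (2 * (k + 1)) := by
    rcases le_total ‖v z‖ₑ 1 with h | h
    · exact (pow_le_pow_right_of_le_one' h (by omega)).trans le_self_add
    · exact (pow_le_pow_right' h (by omega)).trans le_add_self
  have h2 := hmul (‖v z‖ₑ ^ (k + 1)) ‖fderiv ℝ v z‖ₑ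
  rw [← pow_mul, mul_comm (k + 1) 2] at h2
  unfold powDensity
  refine add_le_add hpow ?_
  push_cast
  rw [add_assoc, one_add_one_eq_two]
  gcongr

lemma lintegral_powDensity_succ_le {v : ℝ × ℝ → ℝ} (hv : Differentiable ℝ v)
    (h0 : ∫⁻ z in channel, ‖v z‖ₑ ^ 2 ≤ 1) (h1 : ∫⁻ z in channel, ‖fderiv ℝ v z‖ₑ ^ 2 ≤ 1)
    {k : ℕ} {c : ℝ≥0∞} (hc : ∫⁻ z in channel, ‖v z‖ₑ ^ (2 * (k + 1)) ≤ c) :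
    ∫⁻ z in channel, powDensity v (k + 1) z ≤ 1 + c + (k + 2) * (c + 1) := by
  have hm := hv.continuous.measurable.enorm
  have hd := (measurable_fderiv ℝ v).enorm
  refine (lintegral_mono (powDensity_succ_le v k)).trans ?_
  rw [lintegral_add_left (by fun_prop), lintegral_add_left (by fun_prop),
    lintegral_const_mul _ (by fun_prop), lintegral_add_left (by fun_prop)]
  gcongr

/-- The Sobolev embedding `H¹ ⊂ L^{2k+2}` on the channel. -/
lemma exists_lintegral_enorm_pow_le (k : ℕ) : ∃ c : ℝ≥0∞, c ≠ ⊤ ∧ ∀ v : ℝ × ℝ → ℝ,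
    Differentiable ℝ v → ∫⁻ z in channel, ‖v z‖ₑ ^ 2 ≤ 1 →
    ∫⁻ z in channel, ‖fderiv ℝ v z‖ₑ ^ 2 ≤ 1 →
    ∫⁻ z in channel, ‖v z‖ₑ ^ (2 * (k + 1)) ≤ c := by
  induction k with
  | zero => exact ⟨1, one_ne_top, fun v _ h0 _ => by simpa using h0⟩
  | succ k ih =>
    obtain ⟨c, hc, h⟩ := ih
    refine ⟨(1 + c + (k + 2) * (c + 1)) ^ 2, by finiteness, fun v hv h0 h1 => ?_⟩
    exact (lintegral_enorm_pow_le_sq hv (k + 1)).trans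
      (pow_le_pow_left' (lintegral_powDensity_succ_le hv h0 h1 (h v hv h0 h1)) 2)

lemma exists_lintegral_powDensity_succ_le (k : ℕ) : ∃ c : ℝ≥0∞, c ≠ ⊤ ∧ ∀ v : ℝ × ℝ → ℝ,
    Differentiable ℝ v → ∫⁻ z in channel, ‖v z‖ₑ ^ 2 ≤ 1 →
    ∫⁻ z in channel, ‖fderiv ℝ v z‖ₑ ^ 2 ≤ 1 →
    ∫⁻ z in channel, powDensity v (k + 1) z ≤ c := by
  obtain ⟨c, hc, h⟩ := exists_lintegral_enorm_pow_le k
  exact ⟨1 + c + (k + 2) * (c + 1), by finiteness,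
    fun v hv h0 h1 => lintegral_powDensity_succ_le hv h0 h1 (h v hv h0 h1)⟩

lemma mul_le_rpow_add_pow (a b : ℝ≥0∞) {m : ℕ} (hm : m ≠ 0) :
    a * b ≤ b ^ (1 + 1 / (m : ℝ)) + a ^ (m + 1) := by
  rcases le_total a (b ^ (1 / (m : ℝ))) with h | h
  · refine le_trans ?_ le_self_add
    rw [ENNReal.rpow_add_of_nonneg _ _ zero_le_one (by positivity), ENNReal.rpow_one, mul_comm]
    gcongr
  · refine le_trans ?_ le_add_self
    rw [pow_succ' a m]
    gcongr
    calc b = (b ^ (1 / (m : ℝ))) ^ m := by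
          rw [← ENNReal.rpow_mul_natCast, one_div_mul_cancel (by positivity), ENNReal.rpow_one]
      _ ≤ a ^ m := by gcongr

lemma exists_weighted_lintegral_le {γ : ℝ} (hγ0 : 0 < γ) (hγ : γ < 1) {q : ℝ} (hq : 1 < q) :
    ∃ C : ℝ≥0∞, C ≠ ⊤ ∧ ∀ v : ℝ × ℝ → ℝ, Differentiable ℝ v →
      ∫⁻ z in channel, ‖v z‖ₑ ^ 2 ≤ 1 → ∫⁻ z in channel, ‖fderiv ℝ v z‖ₑ ^ 2 ≤ 1 →
      ∀ ystar : ℝ → ℝ, (∀ x, ystar x ∈ Icc (-1 : ℝ) 1) →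
      (∫⁻ x, (∫⁻ y in Icc (-1 : ℝ) 1,
        ‖v (x, y)‖ₑ ^ 2 * ENNReal.ofReal (|y - ystar x| ^ (-γ))) ^ q) ^ (1 / q) ≤ C := by
  obtain ⟨m, hm⟩ := exists_nat_gt (γ / (1 - γ))
  have hm0 : (0 : ℝ) < m := lt_trans (div_pos hγ0 (by linarith)) hm
  have hm1 : γ * (1 + 1 / m) < 1 := by
    rw [div_lt_iff₀ (by linarith)] at hm
    have : γ * (1 + 1 / m) * m < 1 * m := by field_simp; nlinarith
    exact lt_of_mul_lt_mul_right this hm0.le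
  obtain ⟨W, hW, hWle⟩ := exists_lintegral_abs_sub_rpow_le hγ
  obtain ⟨W', hW', hWle'⟩ := exists_lintegral_abs_sub_rpow_le hm1
  obtain ⟨c, hc, hcle⟩ := exists_lintegral_powDensity_succ_le 0
  obtain ⟨c', hc', hcle'⟩ := exists_lintegral_powDensity_succ_le (2 * m)
  refine ⟨((W' + c') ^ (q - 1) * (c * W)) ^ (1 / q), ?_, fun v hv h0 h1 ystar hy => ?_⟩
  · have : 0 ≤ q - 1 := by linarith
    have : 0 ≤ 1 / q := by positivity
    finiteness
  set K : ℝ → ℝ≥0∞ := fun x => ∫⁻ y in Icc (-1 : ℝ) 1,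
        ‖v (x, y)‖ₑ ^ 2 * ENNReal.ofReal (|y - ystar x| ^ (-γ))
  have hmeas : ∀ (γ c : ℝ), Measurable fun y : ℝ => ENNReal.ofReal (|y - c| ^ (-γ)) :=
    fun γ c => by fun_prop
  have hsup : ∀ x, K x ≤ W' + c' := by
    intro x
    calc K x ≤ ∫⁻ y in Icc (-1 : ℝ) 1, (ENNReal.ofReal (|y - ystar x| ^ (-(γ * (1 + 1 / m)))) +
            ∫⁻ r, powDensity v (2 * m + 1) (r, y)) := by
          refine lintegral_mono fun y => ?_
          refine (mul_le_rpow_add_pow _ _ (by exact_mod_cast hm0.ne' : m ≠ 0)).trans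
            (add_le_add (le_of_eq ?_) ?_)
          · rw [ENNReal.ofReal_rpow_of_nonneg (by positivity) (by positivity),
              ← Real.rpow_mul (abs_nonneg _), neg_mul]
          · rw [← pow_mul]
            exact enorm_pow_le_lintegral_fst hv (2 * m + 1) x y
      _ ≤ W' + c' := by
          rw [lintegral_add_left (hmeas _ _), ← lintegral_channel_symm (measurable_powDensity hv _)]
          exact add_le_add (hWle' _ (hy x)) (hcle' v hv h0 h1)
  have hone : ∫⁻ x, K x ≤ c * W := by
    calc ∫⁻ x, K x ≤ ∫⁻ x, (∫⁻ r in Icc (-1 : ℝ) 1, powDensity v 1 (x, r)) * W := by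
          refine lintegral_mono fun x => ?_
          calc K x ≤ ∫⁻ y in Icc (-1 : ℝ) 1, (∫⁻ r in Icc (-1 : ℝ) 1, powDensity v 1 (x, r)) *
                  ENNReal.ofReal (|y - ystar x| ^ (-γ)) :=
                setLIntegral_mono' measurableSet_Icc fun y hy =>
                  mul_le_mul_left (enorm_pow_le_lintegral_snd hv 1 x hy) _
            _ ≤ _ := by
                rw [lintegral_const_mul _ (hmeas _ _)]
                exact mul_le_mul_right (hWle _ (hy x)) _
      _ ≤ c * W := by
          rw [lintegral_mul_const _ (measurable_powDensity hv 1).lintegral_prod_right',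
            ← lintegral_channel (measurable_powDensity hv 1)]
          exact mul_le_mul_left (hcle v hv h0 h1) _
  gcongr
  calc ∫⁻ x, K x ^ q ≤ ∫⁻ x, (W' + c') ^ (q - 1) * K x := by
        refine lintegral_mono fun x => ?_
        calc K x ^ q = K x ^ ((q - 1) + 1) := by rw [sub_add_cancel]
          _ = K x ^ (q - 1) * K x := by
              rw [ENNReal.rpow_add_of_nonneg _ _ (by linarith : 0 ≤ q - 1) zero_le_one,
                ENNReal.rpow_one]
          _ ≤ _ := by
              exact mul_le_mul_left (ENNReal.rpow_le_rpow (hsup x) (by linarith)) _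
    _ ≤ _ := by
        rw [lintegral_const_mul' _ _
          (ENNReal.rpow_ne_top_of_nonneg (by linarith : 0 ≤ q - 1) (by finiteness))]
        exact mul_le_mul_right hone _

lemma lintegral_enorm_inv_smul_sq_le_one {F : Type*} [NormedAddCommGroup F] [NormedSpace ℝ F]
    {f : ℝ × ℝ → F} {μ : Measure (ℝ × ℝ)} {n : ℝ} (hn : n ≠ 0) (h : eLpNorm f 2 μ ≤ ‖n‖ₑ) :
    ∫⁻ z, ‖n⁻¹ • f z‖ₑ ^ 2 ∂μ ≤ 1 := by
  have h2 := eLpNorm_nnreal_pow_eq_lintegral (f := n⁻¹ • f) (μ := μ) (p := 2) two_ne_zero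
  have h3 : eLpNorm (n⁻¹ • f) 2 μ ≤ 1 := by
    rw [eLpNorm_const_smul]
    calc ‖n⁻¹‖ₑ * eLpNorm f 2 μ ≤ ‖n⁻¹‖ₑ * ‖n‖ₑ := by gcongr
      _ = 1 := by rw [← enorm_mul, inv_mul_cancel₀ hn]; simp
  calc ∫⁻ z, ‖n⁻¹ • f z‖ₑ ^ 2 ∂μ = eLpNorm (n⁻¹ • f) 2 μ ^ (2 : ℝ) := by
        simpa using h2.symm
    _ ≤ 1 := ENNReal.rpow_le_one h3 (by norm_num)

/-- The `H¹` norm on the channel. -/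
noncomputable def h1Norm (v : ℝ × ℝ → ℝ) : ℝ≥0∞ :=
  eLpNorm v 2 (volume.restrict channel)
    + eLpNorm (fun z => ‖fderiv ℝ v z‖) 2 (volume.restrict channel)

/-- Weighted trace estimate: the singular weight costs only the square of the `H¹` norm. -/
lemma exists_weighted_lintegral_le_h1Norm {γ : ℝ} (hγ0 : 0 < γ) (hγ : γ < 1) {q : ℝ} (hq : 1 < q) :
    ∃ C : ℝ≥0∞, C ≠ ⊤ ∧ ∀ v : ℝ × ℝ → ℝ, Differentiable ℝ v → h1Norm v ≠ ⊤ →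
      ∀ ystar : ℝ → ℝ, (∀ x, ystar x ∈ Icc (-1 : ℝ) 1) →
      (∫⁻ x, (∫⁻ y in Icc (-1 : ℝ) 1,
        ‖v (x, y)‖ₑ ^ 2 * ENNReal.ofReal (|y - ystar x| ^ (-γ))) ^ q) ^ (1 / q)
        ≤ C * h1Norm v ^ 2 := by
  obtain ⟨C, hC, h⟩ := exists_weighted_lintegral_le hγ0 hγ hq
  refine ⟨C, hC, fun v hv hN ystar hy => ?_⟩
  have hlt : h1Norm v < ⊤ := hN.lt_top
  have hne : (nhdsWithin (h1Norm v) (Ioi (h1Norm v))).NeBot :=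
    nhdsGT_neBot_of_exists_gt ⟨⊤, hlt⟩
  have hcont : Continuous fun n : ℝ≥0∞ => C * n ^ 2 :=
    (ENNReal.continuous_const_mul hC).comp (ENNReal.continuous_pow 2)
  refine ge_of_tendsto (hcont.continuousWithinAt (s := Ioi (h1Norm v))) ?_
  filter_upwards [Ioo_mem_nhdsGT hlt] with N hNN
  obtain ⟨n, hn0, rfl⟩ : ∃ n : ℝ, 0 < n ∧ N = ‖n‖ₑ := by
    have h0 : 0 < N.toReal := ENNReal.toReal_pos (bot_lt_of_lt hNN.1).ne' hNN.2.ne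
    exact ⟨N.toReal, h0, by rw [Real.enorm_eq_ofReal h0.le, ENNReal.ofReal_toReal hNN.2.ne]⟩
  have hle : h1Norm v ≤ ‖n‖ₑ := hNN.1.le
  have h0 := lintegral_enorm_inv_smul_sq_le_one hn0.ne' (le_self_add.trans hle)
  have h1' : eLpNorm (fderiv ℝ v) 2 (volume.restrict channel) ≤ ‖n‖ₑ := by
    rw [← eLpNorm_norm]; exact le_add_self.trans hle
  have h1 := lintegral_enorm_inv_smul_sq_le_one hn0.ne' h1'
  have hfd : ∀ z, fderiv ℝ (fun z => n⁻¹ • v z) z = n⁻¹ • fderiv ℝ v z :=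
    fun z => fderiv_fun_const_smul (hv z) _
  simp_rw [← hfd] at h1
  have key := h (fun z => n⁻¹ • v z) (hv.fun_const_smul _) h0 h1 ystar hy
  have hnn : ‖n‖ₑ ≠ ⊤ := enorm_ne_top
  have hscale : ∀ x y, ‖v (x, y)‖ₑ ^ 2 = ‖n‖ₑ ^ 2 * ‖n⁻¹ • v (x, y)‖ₑ ^ 2 := by
    intro x y
    rw [← mul_pow, ← enorm_mul, smul_eq_mul, mul_inv_cancel_left₀ hn0.ne']
  simp_rw [hscale, mul_assoc]
  simp_rw [lintegral_const_mul' _ _ (ENNReal.pow_ne_top (n := 2) hnn),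
    ENNReal.mul_rpow_of_nonneg _ _ (by linarith : 0 ≤ q)]
  rw [lintegral_const_mul' _ _ (by have : 0 ≤ q := by linarith
                                   finiteness),
    ENNReal.mul_rpow_of_nonneg _ _ (by positivity), ← ENNReal.rpow_mul,
    mul_one_div_cancel (by linarith), ENNReal.rpow_one, mul_comm C]
  gcongr

section FractionalMorrey

variable {E : Type*} [NormedAddCommGroup E]

/-- The Gagliardo energy density of `f` at `z`, relative to the channel. -/
noncomputable def gagDensity (θ p : ℝ) (f : ℝ × ℝ → E) (z : ℝ × ℝ) : ℝ≥0∞ :=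
  ∫⁻ z' in channel, ENNReal.ofReal (‖f z - f z'‖ ^ p / ‖z - z'‖ ^ (2 + θ * p))

lemma measurable_gagDensity (θ p : ℝ) {f : ℝ × ℝ → E} (hf : Continuous f) :
    Measurable (gagDensity θ p f) := by
  have h1 : Measurable fun w : (ℝ × ℝ) × (ℝ × ℝ) => ‖f w.1 - f w.2‖ :=
    Continuous.measurable (by fun_prop)
  have h2 : Measurable fun w : (ℝ × ℝ) × (ℝ × ℝ) => ‖w.1 - w.2‖ :=
    Continuous.measurable (by fun_prop)
  have h3 : Measurable fun w : (ℝ × ℝ) × (ℝ × ℝ) =>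
      ENNReal.ofReal (‖f w.1 - f w.2‖ ^ p / ‖w.1 - w.2‖ ^ (2 + θ * p)) := by fun_prop
  exact h3.lintegral_prod_right'

lemma exists_gagDensity_le {θ p : ℝ} {f : ℝ × ℝ → E} (hf : Continuous f) {x c d M : ℝ}
    (hc : c ∈ Icc (-1 : ℝ) 1) (hd : d ∈ Icc (-1 : ℝ) 1) (hcd : c ≠ d)
    (hM : ∫⁻ y in Icc (-1 : ℝ) 1, gagDensity θ p f (x, y) ≤ ENNReal.ofReal M) :
    ∃ a ∈ uIcc c d, gagDensity θ p f (x, a) ≤ ENNReal.ofReal (M / |d - c|) := by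
  have hr : 0 < |d - c| := abs_pos.2 (sub_ne_zero.2 hcd.symm)
  have hmeas : Measurable fun y => gagDensity θ p f (x, y) :=
    (measurable_gagDensity θ p hf).comp measurable_prodMk_left
  obtain ⟨a, ha, hle⟩ := exists_le_setLAverage (μ := volume) (s := uIcc c d)
    (by rw [Real.volume_interval]; exact (ENNReal.ofReal_pos.2 hr).ne')
    (by rw [Real.volume_interval]; finiteness) hmeas.aemeasurable
  refine ⟨a, ha, hle.trans ?_⟩
  rw [setLAverage_eq, Real.volume_interval, ENNReal.ofReal_div_of_pos hr]
  gcongr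
  exact (lintegral_mono_set (uIcc_subset_Icc hc hd)).trans hM

lemma norm_sub_le_of_gagDensity_le {θ p : ℝ} (hp : 1 ≤ p) (hθ : 0 ≤ θ) {f : ℝ × ℝ → E}
    (hf : Continuous f) {x c d K : ℝ} (hc : c ∈ Icc (-1 : ℝ) 1) (hd : d ∈ Icc (-1 : ℝ) 1)
    (hcd : c ≠ d) (hK : 0 ≤ K) {a a' : ℝ} (ha : a ∈ uIcc c d) (ha' : a' ∈ uIcc c d)
    (h : gagDensity θ p f (x, a) ≤ ENNReal.ofReal (2 * (K ^ p / |d - c|)))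
    (h' : gagDensity θ p f (x, a') ≤ ENNReal.ofReal (2 * (K ^ p / |d - c|))) :
    ‖f (x, a) - f (x, a')‖ ≤ 8 * |d - c| ^ (θ - 1 / p) * K := by
  set r := |d - c|
  have hr : 0 < r := abs_pos.2 (sub_ne_zero.2 hcd.symm)
  have hp0 : 0 < p := by linarith
  let F : ℝ → ℝ × ℝ → ℝ := fun b w => ‖f (x, b) - f w‖ ^ p / ‖(x, b) - w‖ ^ (2 + θ * p)
  let Q : Set (ℝ × ℝ) := Icc x (x + r) ×ˢ uIcc c d
  have hQ : volume Q = ENNReal.ofReal (r * r) := by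
    rw [Measure.volume_eq_prod, Measure.prod_prod, Real.volume_Icc, Real.volume_interval,
      ENNReal.ofReal_mul hr.le, add_sub_cancel_left]
  have hQc : Q ⊆ channel := prod_mono (subset_univ _) (uIcc_subset_Icc hc hd)
  have hF0 : ∀ b w, 0 ≤ F b w := fun b w => by positivity
  have hFm : ∀ b, Measurable (F b) := by
    intro b
    have h1 : Measurable fun w => ‖f (x, b) - f w‖ := Continuous.measurable (by fun_prop)
    have h2 : Measurable fun w : ℝ × ℝ => ‖(x, b) - w‖ := Continuous.measurable (by fun_prop)
    fun_prop
  obtain ⟨w, hw, hle⟩ := exists_le_setLAverage (μ := volume) (s := Q)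
    (f := fun w => ENNReal.ofReal (F a w) + ENNReal.ofReal (F a' w))
    (by rw [hQ]; exact (ENNReal.ofReal_pos.2 (by positivity)).ne')
    (by rw [hQ]; finiteness) (by have := hFm a; have := hFm a'; fun_prop)
  have hsum : F a w + F a' w ≤ 4 * (K ^ p / r) / (r * r) := by
    rw [setLAverage_eq, hQ, lintegral_add_left (by have := hFm a; fun_prop),
      ← ENNReal.ofReal_add (hF0 _ _) (hF0 _ _)] at hle
    rw [← ENNReal.ofReal_le_ofReal_iff (by positivity), ENNReal.ofReal_div_of_pos (by positivity)]
    refine hle.trans ?_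
    gcongr
    calc _ ≤ gagDensity θ p f (x, a) + gagDensity θ p f (x, a') :=
          add_le_add (lintegral_mono_set hQc) (lintegral_mono_set hQc)
      _ ≤ _ := add_le_add h h'
      _ = _ := by rw [← ENNReal.ofReal_add (by positivity) (by positivity)]; congr 1; ring
  have hdist : ∀ b ∈ uIcc c d, F b w ≤ 4 * (K ^ p / r) / (r * r) →
      ‖f (x, b) - f w‖ ≤ 4 * r ^ (θ - 1 / p) * K := by
    intro b hb hFb
    by_cases hz : ‖(x, b) - w‖ = 0
    · rw [sub_eq_zero.1 (norm_eq_zero.1 hz), sub_self, norm_zero]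
      positivity
    have hz0 : 0 < ‖(x, b) - w‖ := lt_of_le_of_ne (norm_nonneg _) (Ne.symm hz)
    have hzr : ‖(x, b) - w‖ ≤ r := by
      rw [Prod.norm_def]
      refine max_le ?_ ?_
      · have := hw.1
        rw [Real.norm_eq_abs, abs_le]
        constructor <;> simp only [Prod.fst_sub] <;> linarith [this.1, this.2]
      · rw [Real.norm_eq_abs, Prod.snd_sub]
        exact abs_sub_le_of_uIcc_subset_uIcc (uIcc_subset_uIcc hw.2 hb)
    have hpow : ‖f (x, b) - f w‖ ^ p ≤ 4 * (K ^ p / r) / (r * r) * r ^ (2 + θ * p) := by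
      calc _ = F b w * ‖(x, b) - w‖ ^ (2 + θ * p) := by
            rw [div_mul_cancel₀ _ (Real.rpow_pos_of_pos hz0 _).ne']
        _ ≤ _ := by gcongr
    have heq : 4 * (K ^ p / r) / (r * r) * r ^ (2 + θ * p) = 4 * (r ^ (θ - 1 / p) * K) ^ p := by
      rw [Real.mul_rpow (by positivity) hK, ← Real.rpow_mul hr.le, sub_mul,
        one_div_mul_cancel hp0.ne', Real.rpow_add hr, Real.rpow_sub hr, Real.rpow_one,
        Real.rpow_two]
      field_simp
    have h4 : (4 : ℝ) ≤ 4 ^ p := by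
      simpa using Real.rpow_le_rpow_of_exponent_le (by norm_num : (1 : ℝ) ≤ 4) hp
    rw [← Real.rpow_le_rpow_iff (norm_nonneg _) (by positivity) hp0, mul_assoc,
      Real.mul_rpow (by norm_num) (by positivity)]
    refine (hpow.trans_eq heq).trans ?_
    gcongr
  have e1 := hdist a ha (le_trans (le_add_of_nonneg_right (hF0 _ _)) hsum)
  have e2 := hdist a' ha' (le_trans (le_add_of_nonneg_left (hF0 _ _)) hsum)
  calc ‖f (x, a) - f (x, a')‖ = ‖(f (x, a) - f w) - (f (x, a') - f w)‖ := by congr 1; abel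
    _ ≤ _ := norm_sub_le _ _
    _ ≤ _ := by linarith

lemma norm_sub_endpoint_le {θ p : ℝ} (hp : 1 ≤ p) (hθ : 1 / p < θ) {f : ℝ × ℝ → E}
    (hf : Continuous f) {x c d K : ℝ} (hc : c ∈ Icc (-1 : ℝ) 1) (hd : d ∈ Icc (-1 : ℝ) 1)
    (hcd : c ≠ d) (hK : 0 ≤ K)
    (hM : ∫⁻ y in Icc (-1 : ℝ) 1, gagDensity θ p f (x, y) ≤ ENNReal.ofReal (K ^ p)) :
    ∃ a ∈ uIcc c d, gagDensity θ p f (x, a) ≤ ENNReal.ofReal (K ^ p / |d - c|) ∧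
      ‖f (x, a) - f (x, c)‖ ≤
        8 * |d - c| ^ (θ - 1 / p) * K / (1 - (1 / 2 : ℝ) ^ (θ - 1 / p)) := by
  have hr : 0 < |d - c| := abs_pos.2 (sub_ne_zero.2 hcd.symm)
  have hθ0 : 0 ≤ θ := le_trans (by positivity) hθ.le
  let e : ℕ → ℝ := fun n => c + (d - c) * (1 / 2) ^ n
  have he0 : e 0 = d := by simp [e]
  have hsub : ∀ n, |e n - c| = |d - c| * (1 / 2) ^ n := fun n => by
    simp [e, abs_mul]
  have hne : ∀ n, c ≠ e n := fun n => by
    have : 0 < |e n - c| := by rw [hsub]; positivity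
    exact fun h => (abs_pos.1 this) (by rw [← h, sub_self])
  have hstep : ∀ n, e (n + 1) ∈ uIcc c (e n) := by
    intro n
    have h2 : e (n + 1) = c + (e n - c) / 2 := by simp only [e]; ring
    rw [h2, mem_uIcc]
    rcases le_total c (e n) with h | h
    · left; constructor <;> linarith
    · right; constructor <;> linarith
  have hmem : ∀ n, e n ∈ Icc (-1 : ℝ) 1 := by
    intro n
    induction n with
    | zero => rwa [he0]
    | succ n ih => exact uIcc_subset_Icc hc ih (hstep n)
  choose a ha hale using fun n => exists_gagDensity_le hf hc (hmem n) (hne n) hM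
  have htend : Filter.Tendsto a Filter.atTop (nhds c) := by
    rw [tendsto_iff_dist_tendsto_zero]
    refine squeeze_zero (fun _ => dist_nonneg) (g := fun n => |d - c| * (1 / 2 : ℝ) ^ n)
      (fun n => ?_) ?_
    · rw [Real.dist_eq, ← hsub]
      exact abs_sub_left_of_mem_uIcc (ha n)
    · simpa using (tendsto_pow_atTop_nhds_zero_of_lt_one (by norm_num : (0 : ℝ) ≤ 1 / 2)
        (by norm_num)).const_mul |d - c|
  have hlim : Filter.Tendsto (fun n => f (x, a n)) Filter.atTop (nhds (f (x, c))) :=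
    ((hf.comp (Continuous.prodMk_right x)).tendsto c).comp htend
  have hgeo : ∀ n, dist (f (x, a n)) (f (x, a (n + 1))) ≤
      8 * |d - c| ^ (θ - 1 / p) * K * ((1 / 2 : ℝ) ^ (θ - 1 / p)) ^ n := by
    intro n
    have hpos : 0 ≤ K ^ p / |e n - c| := by positivity
    have hb := norm_sub_le_of_gagDensity_le hp hθ0 hf hc (hmem n) (hne n) hK (ha n)
      (uIcc_subset_uIcc left_mem_uIcc (hstep n) (ha (n + 1)))
      ((hale n).trans (ENNReal.ofReal_le_ofReal (by linarith)))
      ((hale (n + 1)).trans_eq (by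
        congr 1; rw [hsub, hsub, pow_succ]; field_simp))
    rw [dist_eq_norm]
    refine hb.trans_eq ?_
    rw [hsub, Real.mul_rpow (by positivity) (by positivity), ← Real.rpow_natCast,
      ← Real.rpow_natCast, ← Real.rpow_mul (by norm_num), ← Real.rpow_mul (by norm_num),
      mul_comm (n : ℝ)]
    ring
  have hlt : (1 / 2 : ℝ) ^ (θ - 1 / p) < 1 :=
    Real.rpow_lt_one (by norm_num) (by norm_num) (by linarith)
  have hfin := dist_le_of_le_geometric_of_tendsto₀ _ _ hlt hgeo hlim
  rw [dist_eq_norm] at hfin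
  refine ⟨a 0, ?_, ?_, hfin⟩
  · simpa only [he0] using ha 0
  · simpa only [he0] using hale 0

/-- Fractional Morrey inequality along vertical slices of the channel. -/
lemma exists_enorm_sub_le_gagDensity {θ p : ℝ} (hp : 1 ≤ p) (hθ : 1 / p < θ) :
    ∃ L : ℝ≥0∞, L ≠ ⊤ ∧ ∀ f : ℝ × ℝ → E, Continuous f → ∀ x : ℝ,
      ∀ c ∈ Icc (-1 : ℝ) 1, ∀ d ∈ Icc (-1 : ℝ) 1,
      ‖f (x, d) - f (x, c)‖ₑ ≤ L * ENNReal.ofReal (|d - c| ^ (θ - 1 / p)) *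
        (∫⁻ y in Icc (-1 : ℝ) 1, gagDensity θ p f (x, y)) ^ (1 / p) := by
  have hp0 : 0 < p := by linarith
  set α := θ - 1 / p with hα
  have hα0 : 0 < α := by rw [hα]; linarith
  have hlt : (1 / 2 : ℝ) ^ α < 1 := Real.rpow_lt_one (by norm_num) (by norm_num) hα0
  have hlt' : 0 < 1 - (1 / 2 : ℝ) ^ α := by linarith
  set L : ℝ := 16 / (1 - (1 / 2 : ℝ) ^ α) + 8 with hL
  have hL0 : 0 < L := by positivity
  refine ⟨ENNReal.ofReal L, by finiteness, fun f hf x c hc d hd => ?_⟩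
  rcases eq_or_ne c d with rfl | hcd
  · simp
  have hr : 0 < |d - c| := abs_pos.2 (sub_ne_zero.2 hcd.symm)
  have hθ0 : 0 ≤ θ := le_trans (by positivity) hθ.le
  set H := ∫⁻ y in Icc (-1 : ℝ) 1, gagDensity θ p f (x, y)
  rcases eq_or_ne H ⊤ with htop | htop
  · rw [htop, ENNReal.top_rpow_of_pos (by positivity), ENNReal.mul_top]
    · exact le_top
    · exact mul_ne_zero (ENNReal.ofReal_pos.2 hL0).ne'
        (ENNReal.ofReal_pos.2 (Real.rpow_pos_of_pos hr _)).ne'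
  set K := H.toReal ^ (1 / p) with hK
  have hK0 : 0 ≤ K := by positivity
  have hHK : H ≤ ENNReal.ofReal (K ^ p) := by
    rw [hK, ← Real.rpow_mul ENNReal.toReal_nonneg, one_div_mul_cancel hp0.ne', Real.rpow_one,
      ENNReal.ofReal_toReal htop]
  have hKe : H ^ (1 / p) = ENNReal.ofReal K := by
    rw [hK, ← ENNReal.ofReal_rpow_of_nonneg ENNReal.toReal_nonneg (by positivity),
      ENNReal.ofReal_toReal htop]
  obtain ⟨a, ha, hga, hna⟩ := norm_sub_endpoint_le hp hθ hf hc hd hcd hK0 hHK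
  obtain ⟨b, hb, hgb, hnb⟩ := norm_sub_endpoint_le hp hθ hf hd hc hcd.symm hK0 hHK
  rw [abs_sub_comm] at hgb hnb
  rw [uIcc_comm] at hb
  have hpos : 0 ≤ K ^ p / |d - c| := by positivity
  have hab := norm_sub_le_of_gagDensity_le hp hθ0 hf hc hd hcd hK0 ha hb
    (hga.trans (ENNReal.ofReal_le_ofReal (by linarith)))
    (hgb.trans (ENNReal.ofReal_le_ofReal (by linarith)))
  have hreal : ‖f (x, d) - f (x, c)‖ ≤ L * |d - c| ^ α * K := by
    calc ‖f (x, d) - f (x, c)‖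
        = ‖(f (x, a) - f (x, c)) - (f (x, a) - f (x, b)) - (f (x, b) - f (x, d))‖ := by
          congr 1; abel
      _ ≤ ‖f (x, a) - f (x, c)‖ + ‖f (x, a) - f (x, b)‖ + ‖f (x, b) - f (x, d)‖ :=
          (norm_sub_le _ _).trans (by gcongr; exact norm_sub_le _ _)
      _ ≤ _ := add_le_add (add_le_add hna hab) hnb
      _ = _ := by rw [hL]; ring
  rw [hKe, ← ENNReal.ofReal_mul hL0.le, ← ENNReal.ofReal_mul (by positivity), ← ofReal_norm]
  exact ENNReal.ofReal_le_ofReal hreal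

end FractionalMorrey

lemma deriv_snd_eq_iteratedFDeriv_one {φ : ℝ × ℝ → ℝ} (hφ : Differentiable ℝ φ) (x y : ℝ) :
    deriv (fun t => φ (x, t)) y = iteratedFDeriv ℝ 1 φ (x, y) fun _ => (0, 1) := by
  rw [iteratedFDeriv_one_apply]
  exact ((hφ (x, y)).hasFDerivAt.comp_hasDerivAt y (hasDerivAt_prodMk_right x y)).deriv

lemma norm_apply_snd_le {n : ℕ} (T : ContinuousMultilinearMap ℝ (fun _ : Fin n => ℝ × ℝ) ℝ) :
    ‖T fun _ => (0, 1)‖ ≤ ‖T‖ := by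
  simpa [Prod.norm_def] using T.le_opNorm fun _ => ((0, 1) : ℝ × ℝ)

lemma hasDerivAt_iteratedFDeriv_one_snd {φ : ℝ × ℝ → ℝ} (hφ : ContDiff ℝ 2 φ) (x y : ℝ) :
    HasDerivAt (fun t => iteratedFDeriv ℝ 1 φ (x, t) fun _ => (0, 1))
      (iteratedFDeriv ℝ 2 φ (x, y) fun _ => (0, 1)) y := by
  have hd : Differentiable ℝ (iteratedFDeriv ℝ 1 φ) :=
    hφ.differentiable_iteratedFDeriv (by norm_num)
  have h := (hd (x, y)).hasFDerivAt.comp_hasDerivAt y (hasDerivAt_prodMk_right x y)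
  have h2 := (ContinuousMultilinearMap.apply ℝ (fun _ : Fin 1 => ℝ × ℝ) ℝ
    fun _ => (0, 1)).hasFDerivAt.comp_hasDerivAt y h
  rw [iteratedFDeriv_succ_apply_left]
  exact h2

lemma eLpNorm_eq_lintegral_slices {p : ℝ} (hp : 0 < p) {f : ℝ × ℝ → ℝ} (hf : Continuous f) :
    eLpNorm f (ENNReal.ofReal p) (volume.restrict channel) =
      (∫⁻ x, ((∫⁻ y in Icc (-1 : ℝ) 1, ‖f (x, y)‖ₑ ^ p) ^ (1 / p)) ^ p) ^ (1 / p) := by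
  have hm := hf.measurable.enorm
  rw [eLpNorm_eq_lintegral_rpow_enorm_toReal (by simpa using hp) (by simp),
    ENNReal.toReal_ofReal hp.le, lintegral_channel (by fun_prop)]
  simp_rw [← ENNReal.rpow_mul, one_div_mul_cancel hp.ne', ENNReal.rpow_one]

lemma gag2_eq_lintegral_slices {θ p : ℝ} (hp : 0 < p) {φ : ℝ × ℝ → ℝ} {m : ℕ}
    (hf : Continuous (iteratedFDeriv ℝ m φ)) :
    gag2 θ p channel φ m = (∫⁻ x, ((∫⁻ y in Icc (-1 : ℝ) 1,
      gagDensity θ p (iteratedFDeriv ℝ m φ) (x, y)) ^ (1 / p)) ^ p) ^ (1 / p) := by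
  simp_rw [← ENNReal.rpow_mul, one_div_mul_cancel hp.ne', ENNReal.rpow_one]
  rw [← lintegral_channel (measurable_gagDensity θ p hf)]
  rfl

lemma enorm_sub_le_rpow_mul {p : ℝ} (hp : 1 < p) {u : ℝ → ℝ} (hu : Differentiable ℝ u)
    {c d : ℝ} (hc : c ∈ Icc (-1 : ℝ) 1) (hd : d ∈ Icc (-1 : ℝ) 1) :
    ‖u d - u c‖ₑ ≤ ENNReal.ofReal (|d - c| ^ (1 - 1 / p)) *
      (∫⁻ y in Icc (-1 : ℝ) 1, ‖deriv u y‖ₑ ^ p) ^ (1 / p) := by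
  have hpq := Real.HolderConjugate.conjExponent hp
  have hH := ENNReal.lintegral_mul_le_Lp_mul_Lq (volume.restrict (uIcc c d)) hpq
    (measurable_deriv u).enorm.aemeasurable (aemeasurable_const (b := (1 : ℝ≥0∞)))
  simp only [Pi.mul_apply, mul_one, ENNReal.one_rpow, lintegral_const, one_mul,
    Measure.restrict_apply_univ, Real.volume_interval] at hH
  refine (enorm_sub_le_lintegral_deriv hu c d).trans (hH.trans ?_)
  rw [mul_comm, ENNReal.ofReal_rpow_of_nonneg (abs_nonneg _) hpq.symm.one_div_nonneg,
    show 1 / p.conjExponent = 1 - 1 / p by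
      rw [one_div, one_div, ← hpq.inv_add_inv_eq_one]; ring]
  gcongr
  exact uIcc_subset_Icc hc hd

/-- For `s > 1 + 1/p` the slices of `∂_y φ` are Hölder continuous, with a constant
whose `L^p` norm in `x` is at most the `W^{s,p}` norm of `φ`. -/
lemma exists_slice_holder {s p : ℝ} (hp : 1 < p) (hs : 1 + 1 / p < s) :
    ∃ α : ℝ, 0 < α ∧ α < 1 ∧ ∃ L : ℝ≥0∞, L ≠ ⊤ ∧
      ∀ φ : ℝ × ℝ → ℝ, ContDiff ℝ (⌊s⌋₊ : ℕ) φ →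
      ∃ H : ℝ → ℝ≥0∞, Measurable H ∧ (∫⁻ x, H x ^ p) ^ (1 / p) ≤ sob2 s p channel φ ∧
        ∀ x : ℝ, ∀ c ∈ Icc (-1 : ℝ) 1, ∀ d ∈ Icc (-1 : ℝ) 1,
          ‖deriv (fun t => φ (x, t)) d - deriv (fun t => φ (x, t)) c‖ₑ ≤
            L * ENNReal.ofReal (|d - c| ^ α) * H x := by
  have hp0 : 0 < p := by linarith
  have hip : 0 < 1 / p := by positivity
  have hip1 : 1 / p < 1 := (div_lt_one hp0).2 hp
  rcases le_or_gt 2 s with h2 | h2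
  · have hfl : 2 ≤ ⌊s⌋₊ := Nat.le_floor (by exact_mod_cast h2)
    refine ⟨1 - 1 / p, by linarith, by linarith, 1, one_ne_top, fun φ hφ' => ?_⟩
    have hφ : ContDiff ℝ 2 φ := hφ'.of_le (by exact_mod_cast hfl)
    have hcont : Continuous fun z => ‖iteratedFDeriv ℝ 2 φ z‖ :=
      (hφ.continuous_iteratedFDeriv le_rfl).norm
    refine ⟨fun x => (∫⁻ y in Icc (-1 : ℝ) 1, ‖‖iteratedFDeriv ℝ 2 φ (x, y)‖‖ₑ ^ p) ^ (1 / p),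
      ?_, ?_, fun x c hc d hd => ?_⟩
    · have hm := hcont.measurable.enorm.pow_const p
      exact hm.lintegral_prod_right'.pow_const _
    · rw [← eLpNorm_eq_lintegral_slices hp0 hcont]
      refine le_trans ?_ le_self_add
      exact Finset.single_le_sum (f := fun j => eLpNorm (fun z => ‖iteratedFDeriv ℝ j φ z‖)
        (ENNReal.ofReal p) (volume.restrict channel)) (fun _ _ => zero_le)
        (Finset.mem_range.2 (by omega))
    · have hφd : Differentiable ℝ φ := hφ.differentiable (by norm_num)
      simp_rw [deriv_snd_eq_iteratedFDeriv_one hφd]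
      have hder := hasDerivAt_iteratedFDeriv_one_snd hφ x
      refine (enorm_sub_le_rpow_mul hp (fun y => (hder y).differentiableAt) hc hd).trans ?_
      rw [one_mul]
      gcongr with y
      rw [(hder y).deriv, enorm_norm, enorm_le_iff_norm_le]
      exact norm_apply_snd_le _
  · have hfl : ⌊s⌋₊ = 1 := (Nat.floor_eq_iff (by linarith)).2 ⟨by push_cast; linarith,
      by push_cast; linarith⟩
    obtain ⟨L, hL, hLle⟩ := exists_enorm_sub_le_gagDensity
      (E := ContinuousMultilinearMap ℝ (fun _ : Fin 1 => ℝ × ℝ) ℝ) hp.le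
      (show 1 / p < s - 1 by linarith)
    refine ⟨s - 1 - 1 / p, by linarith, by linarith, L, hL, fun φ hφ => ?_⟩
    rw [hfl, Nat.cast_one] at hφ
    have hcont : Continuous (iteratedFDeriv ℝ 1 φ) := hφ.continuous_iteratedFDeriv (by simp)
    refine ⟨fun x => (∫⁻ y in Icc (-1 : ℝ) 1,
      gagDensity (s - 1) p (iteratedFDeriv ℝ 1 φ) (x, y)) ^ (1 / p), ?_, ?_,
      fun x c hc d hd => ?_⟩
    · exact (measurable_gagDensity _ p hcont).lintegral_prod_right'.pow_const _
    · rw [← gag2_eq_lintegral_slices hp0 hcont, sob2, hfl, Nat.cast_one, if_neg (by linarith)]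
      exact le_add_self
    · simp_rw [deriv_snd_eq_iteratedFDeriv_one (hφ.differentiable one_ne_zero)]
      refine le_trans ?_ (hLle _ hcont x c hc d hd)
      rw [enorm_le_iff_norm_le]
      exact norm_apply_snd_le (iteratedFDeriv ℝ 1 φ (x, d) - iteratedFDeriv ℝ 1 φ (x, c))

lemma ofReal_weighted_le {α : ℝ} {L H : ℝ≥0∞} {g : ℝ → ℝ} {y y₀ : ℝ}
    (hg : ‖g y - g y₀‖ₑ ≤ L * ENNReal.ofReal (|y - y₀| ^ α) * H) (h0 : g y₀ = 0) (w : ℝ) :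
    ENNReal.ofReal (w ^ 2 * |g y| / |y - y₀|) ≤
      L * H * (‖w‖ₑ ^ 2 * ENNReal.ofReal (|y - y₀| ^ (-(1 - α)))) := by
  rcases eq_or_ne y y₀ with rfl | hy
  · simp
  have hd : 0 < |y - y₀| := abs_pos.2 (sub_ne_zero.2 hy)
  rw [h0, sub_zero] at hg
  calc ENNReal.ofReal (w ^ 2 * |g y| / |y - y₀|)
      = ‖w‖ₑ ^ 2 * ‖g y‖ₑ * ENNReal.ofReal (|y - y₀|⁻¹) := by
        rw [div_eq_mul_inv, ENNReal.ofReal_mul (by positivity), ENNReal.ofReal_mul (by positivity),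
          ← sq_abs, ENNReal.ofReal_pow (abs_nonneg _), Real.enorm_eq_ofReal_abs,
          Real.enorm_eq_ofReal_abs]
    _ ≤ ‖w‖ₑ ^ 2 * (L * ENNReal.ofReal (|y - y₀| ^ α) * H) * ENNReal.ofReal (|y - y₀|⁻¹) := by
        gcongr
    _ = L * H * (‖w‖ₑ ^ 2 * (ENNReal.ofReal (|y - y₀| ^ α) * ENNReal.ofReal (|y - y₀|⁻¹))) := by
        ring
    _ = _ := by
        rw [← ENNReal.ofReal_mul (by positivity), ← Real.rpow_neg_one, ← Real.rpow_add hd]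
        congr 4
        ring

/-- Weighted critical-layer estimate: for `s > 1 + 1/p`,
`φ ∈ W^{s,p}(Ω)`, a measurable `y_* : ℝ → [-1,1]` with `∂_y φ(x, y_*(x)) = 0` for a.e.
`x ∈ B`, and any `v ∈ H¹(Ω)`, the weighted integral
`∫_B ∫_{-1}^1 |v|² |∂_y φ| / |y - y_*(x)| dy dx` is bounded by
`C ‖φ‖_{W^{s,p}(Ω)} ‖v‖²_{H¹(Ω)}`. -/
theorem stmt11 (s p : ℝ) (hp : 1 < p) (hs : 1 + 1 / p < s) :
    ∃ C : ℝ≥0∞, C ≠ ⊤ ∧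
      ∀ (φ : ℝ × ℝ → ℝ), ContDiff ℝ (⌊s⌋₊ : ℕ) φ →
      ∀ (ystar : ℝ → ℝ) (B : Set ℝ), Measurable ystar → MeasurableSet B →
        (∀ x, ystar x ∈ Set.Icc (-1 : ℝ) 1) →
        (∀ᵐ x ∂(volume.restrict B), deriv (fun t => φ (x, t)) (ystar x) = 0) →
        ∀ v : ℝ × ℝ → ℝ, Differentiable ℝ v →
          (∫⁻ x in B, ∫⁻ y in Set.Icc (-1 : ℝ) 1,
              ENNReal.ofReal (v (x, y) ^ 2 * |deriv (fun t => φ (x, t)) y| / |y - ystar x|))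
            ≤ C * sob2 s p channel φ *
              (eLpNorm v 2 (volume.restrict channel)
                + eLpNorm (fun z => ‖fderiv ℝ v z‖) 2 (volume.restrict channel)) ^ 2 := by
  obtain ⟨α, hα0, hα1, L, hL, hHolder⟩ := exists_slice_holder hp hs
  have hpq := Real.HolderConjugate.conjExponent hp
  obtain ⟨C, hC, hCle⟩ := exists_weighted_lintegral_le_h1Norm
    (show 0 < 1 - α by linarith) (by linarith) hpq.symm.lt
  have hp0 : 0 < p := by linarith
  refine ⟨L * C + 1, by finiteness, fun φ hφ ystar B hmy hB hy hcrit v hv => ?_⟩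
  obtain ⟨H, hHm, hHle, hH⟩ := hHolder φ hφ
  set K : ℝ → ℝ≥0∞ := fun x => ∫⁻ y in Icc (-1 : ℝ) 1,
    ‖v (x, y)‖ₑ ^ 2 * ENNReal.ofReal (|y - ystar x| ^ (-(1 - α))) with hK
  have hvm := hv.continuous.measurable.enorm
  have hint : Measurable fun z : ℝ × ℝ =>
      ‖v z‖ₑ ^ 2 * ENNReal.ofReal (|z.2 - ystar z.1| ^ (-(1 - α))) := by fun_prop
  have hKm : Measurable K := hint.lintegral_prod_right'
  have hmain : (∫⁻ x in B, ∫⁻ y in Icc (-1 : ℝ) 1,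
      ENNReal.ofReal (v (x, y) ^ 2 * |deriv (fun t => φ (x, t)) y| / |y - ystar x|))
      ≤ L * ∫⁻ x, H x * K x := by
    calc _ ≤ ∫⁻ x in B, L * (H x * K x) := by
          refine lintegral_mono_ae ?_
          filter_upwards [hcrit] with x hx
          have hxm : Measurable fun y =>
              ‖v (x, y)‖ₑ ^ 2 * ENNReal.ofReal (|y - ystar x| ^ (-(1 - α))) :=
            hint.comp measurable_prodMk_left
          rw [← mul_assoc, hK, ← lintegral_const_mul _ hxm]
          exact setLIntegral_mono' measurableSet_Icc fun y hyI =>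
            ofReal_weighted_le (hH x _ (hy x) y hyI) hx _
      _ ≤ ∫⁻ x, L * (H x * K x) := setLIntegral_le_lintegral _ _
      _ = _ := lintegral_const_mul' _ _ hL
  refine hmain.trans ?_
  change _ ≤ (L * C + 1) * sob2 s p channel φ * h1Norm v ^ 2
  rcases eq_or_ne (sob2 s p channel φ) 0 with hS | hS
  · have hH0 : ∀ᵐ x, H x = 0 := by
      rw [hS, nonpos_iff_eq_zero, ENNReal.rpow_eq_zero_iff_of_pos (by positivity),
        lintegral_eq_zero_iff (by fun_prop)] at hHle
      filter_upwards [hHle] with x hx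
      exact (ENNReal.rpow_eq_zero_iff_of_pos hp0).1 hx
    have : ∫⁻ x, H x * K x = 0 := by
      rw [← lintegral_zero (μ := (volume : Measure ℝ))]
      exact lintegral_congr_ae (by filter_upwards [hH0] with x hx; simp [hx])
    simp [this]
  rcases eq_or_ne (h1Norm v) ⊤ with hN | hN
  · rw [hN, ENNReal.top_pow two_ne_zero, ENNReal.mul_top (mul_ne_zero (by simp) hS)]
    exact le_top
  calc L * ∫⁻ x, H x * K x
      ≤ L * ((∫⁻ x, H x ^ p) ^ (1 / p) *
          (∫⁻ x, K x ^ p.conjExponent) ^ (1 / p.conjExponent)) := by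
        gcongr
        exact ENNReal.lintegral_mul_le_Lp_mul_Lq _ hpq hHm.aemeasurable hKm.aemeasurable
    _ ≤ L * (sob2 s p channel φ * (C * h1Norm v ^ 2)) := by
        gcongr
        exact hCle v hv hN ystar hy
    _ = L * C * sob2 s p channel φ * h1Norm v ^ 2 := by ring
    _ ≤ _ := by
        gcongr
        exact le_self_add
end
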